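/- (Ribbon Pieri rule, homogeneous version.) Fix n ≥ 1, k ≥ 1, a partition λ, and N ≥ 1. Let h_k(A_q(x)) denote the complete homogeneous symmetric polynomial of degree k evaluated at the nN variables {q^{2j} x_i : 1 ≤ i ≤ N, 0 ≤ j ≤ n−1}. Then in ℤ[q][x_1,…,x_N] one has h_k(A_q(x)) · 𝒢_λ(x_1,…,x_N;q) = Σ_μ q^{s(μ/λ)} · 𝒢_μ(x_1,…,x_N;q), where the sum is over all partitions μ ⊇ λ such that μ/λ is a horizontal n-ribbon strip with k ribbons, and s(μ/λ) is the spin of that strip. -/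

import Mathlib

/-!
Ribbon functions are handled through the edge sequence of a Young diagram, a configuration of beads
on `ℤ` (`bit`). Adding an `n`-ribbon means letting a bead jump `n` places to the right, and the spin
is the number of beads passed (`AddR.bit_iff`, `AddR.spin`). A horizontal `n`-ribbon strip is a set
of such jumps in which each position holds at most one bead at a time (`HSb`, `tiling_of_HSb`,
`HSb_iff_tiling`), so that the weight `q^spin x^(number of ribbons)` of a strip is a matrix element
of a one-row transfer matrix (`line`, `line_of_HSb`) whose state records the pending jumps.

Let `U x` be the operator adding a strip and `D t` its transpose, removing a strip. The heart of the
proof is the commutation relation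
`(∏_{j < n} (1 - q^{2j} x t)) · D t · U x = U x · D t` (`Uw_comm`), read as a congruence modulo powers
of `t` so that all sums are finite. In terms of transfer matrices it compares two rows with a common
upper configuration with two rows with a common lower configuration. An explicit operator `Rop` on
the states of two rows, with spectral parameter `x t`, intertwines the two kinds of steps
(`intertwine`), which is verified position by position. On the far left, filled with beads, it
acts trivially (`Rop_ones_zs`); on the far right, without beads, it acts on the vacuum by the scalar
`∏_{j < n} (1 - q^{2j} x t)` (`Rop_vac`), and states with pending jumps of the second row cost high
powers of `t` there (`Lops_zs_dvd`).

The ribbon function is a matrix element of `U (x_N) ⋯ U (x_1)` starting from the `n`-core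
(`tab_sum`), which is fixed by `D t` (`core_bottom`). Moving `D t` through all the letters
(`pieri_trunc`) shows that `∑_μ q^{s(μ/λ)} t^{|μ/λ|/n} 𝒢_μ`, multiplied by
`∏_{i,j} (1 - q^{2j} x_i t)`, is `𝒢_λ`. The inverse of this product is the generating function of the
complete homogeneous polynomials of the alphabet (`hPoly_series`), and the coefficient of `t^k` is the
Pieri rule. Since `Rop` uses the inverse of `q`, the identity is proved in the fraction field. The
diagrams `μ` have the same core as `λ` (`nCore_eq`), and the tiling of a strip is unique
(`tiling_unique`), so the sums are the ones in the statement.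
-/

open scoped Classical

noncomputable section

/-- A cell of a Young/skew diagram: (row, column). -/
abbrev Cell : Type := ℕ × ℕ

/-- Two cells are adjacent if they share an edge. -/
def Adj (a b : Cell) : Prop :=
  (a.1 = b.1 ∧ (a.2 + 1 = b.2 ∨ b.2 + 1 = a.2)) ∨
  (a.2 = b.2 ∧ (a.1 + 1 = b.1 ∨ b.1 + 1 = a.1))

/-- Reachability inside a finite set of cells via edge-adjacency. -/
def Reach (S : Finset Cell) (a b : Cell) : Prop :=
  Relation.ReflTransGen (fun x y => y ∈ S ∧ Adj x y) a b

/-- A set of cells is connected if any two of its cells are joined by a path inside it. -/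
def CellsConnected (S : Finset Cell) : Prop :=
  ∀ a ∈ S, ∀ b ∈ S, Reach S a b

/-- The connected component of the cell `c` inside `S`. -/
def component (S : Finset Cell) (c : Cell) : Finset Cell :=
  S.filter (fun d => Reach S c d)

/-- The number of connected components of a set of cells. -/
def numComponents (S : Finset Cell) : ℕ :=
  (S.image (fun c => component S c)).card

/-- `S` contains no 2 × 2 square of cells. -/
def NoSquare (S : Finset Cell) : Prop :=
  ¬ ∃ i j : ℕ, (i, j) ∈ S ∧ (i + 1, j) ∈ S ∧ (i, j + 1) ∈ S ∧ (i + 1, j + 1) ∈ S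

/-- `S` is (the set of cells of) a skew shape `λ/μ`. -/
def IsSkewCells (S : Finset Cell) : Prop :=
  ∃ lam mu : YoungDiagram, mu ≤ lam ∧ S = lam.cells \ mu.cells

/-- An `n`-ribbon: a connected skew shape with `n` cells and no 2 × 2 square. -/
def IsRibbon (n : ℕ) (S : Finset Cell) : Prop :=
  S.card = n ∧ CellsConnected S ∧ NoSquare S ∧ IsSkewCells S

/-- The spin of a ribbon: the number of rows it occupies, minus 1. -/
def ribbonSpin (S : Finset Cell) : ℕ := (S.image Prod.fst).card - 1

/-- `T` is a tiling of the cell set `S` by `n`-ribbons. -/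
def IsTilingOf (n : ℕ) (S : Finset Cell) (T : Finset (Finset Cell)) : Prop :=
  (∀ R ∈ T, IsRibbon n R) ∧
  ((T : Set (Finset Cell)).Pairwise fun A B => Disjoint A B) ∧
  T.biUnion id = S

/-- `S` can be tiled by `n`-ribbons. -/
def Tileable (n : ℕ) (S : Finset Cell) : Prop := ∃ T, IsTilingOf n S T

/-- Total spin of a tiling. -/
def tilingSpin (T : Finset (Finset Cell)) : ℕ := ∑ R ∈ T, ribbonSpin R

/-- The maximum spin of an `n`-ribbon tiling of `S`. -/
def maxSpin (n : ℕ) (S : Finset Cell) : ℕ :=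
  sSup {m : ℕ | ∃ T, IsTilingOf n S T ∧ tilingSpin T = m}

/-- `c` is the topright-most cell of `R`: maximal column and, among those, minimal row. -/
def TopRightCell (R : Finset Cell) (c : Cell) : Prop :=
  c ∈ R ∧ ∀ d ∈ R, d.2 ≤ c.2 ∧ (d.2 = c.2 → c.1 ≤ d.1)

/-- Every ribbon of the tiling `T` has its topright-most cell touching the northern
edge of the shape `S`: the cell directly above it is not in `S`. -/
def NorthernCond (S : Finset Cell) (T : Finset (Finset Cell)) : Prop :=
  ∀ R ∈ T, ∀ c : Cell, TopRightCell R c → (c.1 = 0 ∨ (c.1 - 1, c.2) ∉ S)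

/-- `T` is a tiling of `S` witnessing that `S` is a horizontal `n`-ribbon strip. -/
def IsHStripTiling (n : ℕ) (S : Finset Cell) (T : Finset (Finset Cell)) : Prop :=
  IsTilingOf n S T ∧ NorthernCond S T

/-- `S` is a horizontal `n`-ribbon strip. -/
def IsHStripCells (n : ℕ) (S : Finset Cell) : Prop :=
  IsSkewCells S ∧ ∃ T, IsHStripTiling n S T

/-- The spin of a horizontal `n`-ribbon strip (via its tiling, which is unique when it exists). -/
def stripSpin (n : ℕ) (S : Finset Cell) : ℕ :=
  if h : ∃ T, IsHStripTiling n S T then tilingSpin h.choose else 0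

/-- Conjugate (transpose) of a set of cells. -/
def swapCells (S : Finset Cell) : Finset Cell := S.image Prod.swap

/-- `S` is a vertical `n`-ribbon strip: its conjugate is a horizontal one. -/
def IsVStripCells (n : ℕ) (S : Finset Cell) : Prop :=
  IsHStripCells n (swapCells S)

/-- The spin of a vertical `n`-ribbon strip with `k = |S|/n` ribbons:
`k (n-1)` minus the spin of the conjugate strip. -/
def vStripSpin (n : ℕ) (S : Finset Cell) : ℕ :=
  (S.card / n) * (n - 1) - stripSpin n (swapCells S)

/-- `T` is a tiling of `S` witnessing that `S` is a vertical `n`-ribbon strip. -/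
def IsVStripTiling (n : ℕ) (S : Finset Cell) (T : Finset (Finset Cell)) : Prop :=
  IsHStripTiling n (swapCells S) (T.image swapCells)

/-- `mu` is obtained from `lam` by removing a single `n`-ribbon. -/
def RibbonStep (n : ℕ) (lam mu : YoungDiagram) : Prop :=
  mu ≤ lam ∧ IsRibbon n (lam.cells \ mu.cells)

/-- `delta` is the `n`-core of `lam`: it is obtained from `lam` by successively removing
`n`-ribbons, and no further `n`-ribbon can be removed from it. -/
def IsNCoreOf (n : ℕ) (delta lam : YoungDiagram) : Prop :=
  Relation.ReflTransGen (RibbonStep n) lam delta ∧ ∀ mu, ¬ RibbonStep n delta mu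

/-- The `n`-core of a partition (defined via choice; it exists and is unique). -/
def nCore (n : ℕ) (lam : YoungDiagram) : YoungDiagram :=
  if h : ∃ d, IsNCoreOf n d lam then h.choose else lam

/-- A semistandard `n`-ribbon tableau of shape `lam/mu` with entries in `{1, …, N}`:
a chain of partitions `mu = μ⁰ ⊆ μ¹ ⊆ ⋯ ⊆ μᴺ = lam` where each `μⁱ/μ^{i-1}` is a (possibly
empty) horizontal `n`-ribbon strip, together with the (unique) tiling of each strip. -/
structure RibbonTableau (n N : ℕ) (lam mu : YoungDiagram) where
  chain : Fin (N + 1) → YoungDiagram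
  chain_zero : chain 0 = mu
  chain_last : chain (Fin.last N) = lam
  chain_mono : ∀ i : Fin N, chain i.castSucc ≤ chain i.succ
  tiling : Fin N → Finset (Finset Cell)
  tiling_strip : ∀ i : Fin N,
    IsHStripTiling n ((chain i.succ).cells \ (chain i.castSucc).cells) (tiling i)

/-- The spin of a ribbon tableau. -/
def RibbonTableau.spin {n N : ℕ} {lam mu : YoungDiagram} (T : RibbonTableau n N lam mu) : ℕ :=
  ∑ i : Fin N, tilingSpin (T.tiling i)

/-- A standard ribbon tableau: each letter occurs exactly once. -/
def RibbonTableau.IsStandard {n N : ℕ} {lam mu : YoungDiagram}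
    (T : RibbonTableau n N lam mu) : Prop :=
  ∀ i : Fin N, (T.tiling i).card = 1

/-- The monomial `q^{spin T} x^{weight T}` attached to a ribbon tableau. -/
def tableauTerm {n N : ℕ} {lam mu : YoungDiagram} (T : RibbonTableau n N lam mu) :
    MvPolynomial (Fin N) (Polynomial ℤ) :=
  MvPolynomial.C (Polynomial.X ^ T.spin) *
    ∏ i : Fin N, MvPolynomial.X i ^ (T.tiling i).card

/-- The ribbon function `𝒢_{lam/mu}(x₁, …, x_N; q)`. -/
def ribbonFn (n N : ℕ) (lam mu : YoungDiagram) : MvPolynomial (Fin N) (Polynomial ℤ) :=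
  ∑ᶠ T : RibbonTableau n N lam mu, tableauTerm T

/-- `𝒢_lam = 𝒢_{lam/(n-core of lam)}`. -/
def G (n N : ℕ) (lam : YoungDiagram) : MvPolynomial (Fin N) (Polynomial ℤ) :=
  ribbonFn n N lam (nCore n lam)

/-- The Schur polynomial `s_ν(x₁,…,x_N)`, realized as the `n = 1` ribbon function
(1-ribbon tableaux are exactly semistandard Young tableaux, and all spins are 0). -/
def schurPoly (N : ℕ) (nu : YoungDiagram) : MvPolynomial (Fin N) (Polynomial ℤ) :=
  ribbonFn 1 N nu ⊥

/-- The cells of the `i`-th horizontal strip of a decomposition. -/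
def stripCells {len : ℕ} (strip : Fin len → Finset (Finset Cell)) (i : Fin len) : Finset Cell :=
  (strip i).biUnion id

/-- The cells of `lam` together with the strips up to (and including) `i`. -/
def partialCells {len : ℕ} (strip : Fin len → Finset (Finset Cell)) (lam : YoungDiagram)
    (i : Fin len) : Finset Cell :=
  lam.cells ∪ (Finset.univ.filter (fun j => j ≤ i)).biUnion (fun j => stripCells strip j)

/-- The union of the cells of the strips strictly before `i`. -/
def prevCells {len : ℕ} (strip : Fin len → Finset (Finset Cell)) (i : Fin len) : Finset Cell :=
  (Finset.univ.filter (fun j => j < i)).biUnion (fun j => stripCells strip j)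

/-- Two cell sets touch if some cell of one is adjacent to some cell of the other. -/
def Touches (A B : Finset Cell) : Prop :=
  ∃ a ∈ A, ∃ b ∈ B, Adj a b

/-- `R` is the rightmost ribbon within the cell set `C`. -/
def IsRightmostIn (R C : Finset Cell) : Prop :=
  ∃ c ∈ R, ∀ d ∈ C, d.2 ≤ c.2

/-- A border `n`-ribbon strip of shape `mu/lam`: the connected skew shape `mu/lam` with a
distinguished decomposition into disjoint non-empty horizontal `n`-ribbon strips
`T₁, …, T_len` (each recorded by its tiling) such that each partial union is a skew shape,
`T₁` is connected, and for `i ≥ 2` every connected component `C` of `Tᵢ` is such that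
`C ∪ (T₁ ∪ ⋯ ∪ T_{i-1})` is not a horizontal `n`-ribbon strip and only the rightmost
ribbon of `C` touches `T₁ ∪ ⋯ ∪ T_{i-1}`. -/
structure BorderRibbonStrip (n : ℕ) (lam mu : YoungDiagram) where
  len : ℕ
  len_pos : 1 ≤ len
  strip : Fin len → Finset (Finset Cell)
  sub : lam ≤ mu
  connected : CellsConnected (mu.cells \ lam.cells)
  nonempty : ∀ i, (strip i).Nonempty
  disj : ∀ i j, i ≠ j → Disjoint (stripCells strip i) (stripCells strip j)
  cover : Finset.univ.biUnion (fun i => stripCells strip i) = mu.cells \ lam.cells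
  shape : ∀ i, ∃ nu : YoungDiagram, nu.cells = partialCells strip lam i
  hstrips : ∀ i, IsHStripTiling n (stripCells strip i) (strip i)
  first_connected : CellsConnected (stripCells strip ⟨0, len_pos⟩)
  comp_cond : ∀ i : Fin len, 0 < (i : ℕ) → ∀ c ∈ stripCells strip i,
    (¬ IsHStripCells n (component (stripCells strip i) c ∪ prevCells strip i)) ∧
    (∀ R ∈ strip i, R ⊆ component (stripCells strip i) c →
      Touches R (prevCells strip i) → IsRightmostIn R (component (stripCells strip i) c))

/-- The height of a border ribbon strip: total number of connected components of its
horizontal strips, minus 1. -/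
def BorderRibbonStrip.height {n : ℕ} {lam mu : YoungDiagram}
    (S : BorderRibbonStrip n lam mu) : ℕ :=
  (∑ i : Fin S.len, numComponents (stripCells S.strip i)) - 1

/-- The spin of a border ribbon strip. -/
def BorderRibbonStrip.spin {n : ℕ} {lam mu : YoungDiagram}
    (S : BorderRibbonStrip n lam mu) : ℕ :=
  ∑ i : Fin S.len, tilingSpin (S.strip i)

/-- The size (number of ribbons) of a border ribbon strip. -/
def BorderRibbonStrip.size {n : ℕ} {lam mu : YoungDiagram}
    (S : BorderRibbonStrip n lam mu) : ℕ :=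
  ∑ i : Fin S.len, (S.strip i).card

/-- `𝒳^{mu/lam}_k(q) = Σ_S (-1)^{h(S)} q^{s(S)}` over border `n`-ribbon strips of shape
`mu/lam` with `k` ribbons. -/
def chiX (n k : ℕ) (lam mu : YoungDiagram) : Polynomial ℤ :=
  ∑ᶠ S : BorderRibbonStrip n lam mu,
    if S.size = k then (-1) ^ S.height * Polynomial.X ^ S.spin else 0

/-- The complete homogeneous symmetric polynomial of degree `k` evaluated at the family `v`. -/
def hPoly {ι R : Type*} [Fintype ι] [DecidableEq ι] [CommSemiring R] (k : ℕ) (v : ι → R) : R :=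
  ∑ d : Sym ι k, ((d : Multiset ι).map v).prod

/-- The elementary symmetric polynomial of degree `k` evaluated at the family `v`. -/
def ePoly {ι R : Type*} [Fintype ι] [DecidableEq ι] [CommSemiring R] (k : ℕ) (v : ι → R) : R :=
  ∑ s ∈ Finset.univ.powersetCard k, ∏ i ∈ s, v i

/-- The alphabet `A_q(x) = {q^{2j} x_i : 1 ≤ i ≤ N, 0 ≤ j ≤ n-1}`. -/
def alphabetVal (n N : ℕ) : Fin N × Fin n → MvPolynomial (Fin N) (Polynomial ℤ) :=
  fun p => MvPolynomial.C (Polynomial.X ^ (2 * (p.2 : ℕ))) * MvPolynomial.X p.1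

/-- The Schur function `s_lam` evaluated at the alphabet `A_q(x)`,
i.e. the plethysm `s_lam[(1+q²+⋯+q^{2n-2})X]` in `N` variables. -/
def schurAlph (n N : ℕ) (lam : YoungDiagram) : MvPolynomial (Fin N) (Polynomial ℤ) :=
  MvPolynomial.aeval
    (fun t : Fin (n * N) => alphabetVal n N (Prod.swap (finProdFinEquiv.symm t)))
    (schurPoly (n * N) lam)

end

/-! ### The intertwining operator -/

section Intertwiner
variable {A : Type*} [CommRing A]

/-- The number of first components equal to `true` in a list of pairs of bits. -/
def nE (s : List (Bool × Bool)) : ℕ := s.countP (fun c => c.1)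
/-- The number of second components equal to `true` in a list of pairs of bits. -/
def nF (s : List (Bool × Bool)) : ℕ := s.countP (fun c => c.2)

@[simp] lemma nE_nil : nE [] = 0 := rfl
@[simp] lemma nF_nil : nF [] = 0 := rfl
@[simp] lemma nE_cons (c : Bool × Bool) (s) : nE (c :: s) = nE s + (if c.1 then 1 else 0) := by
  simp [nE, List.countP_cons]
@[simp] lemma nF_cons (c : Bool × Bool) (s) : nF (c :: s) = nF s + (if c.2 then 1 else 0) := by
  simp [nF, List.countP_cons]
@[simp] lemma nE_append (s u) : nE (s ++ u) = nE s + nE u := by simp [nE]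
@[simp] lemma nF_append (s u) : nF (s ++ u) = nF s + nF u := by simp [nF]

/-- The intertwining operator, acting on functions of a state of the two-row transfer matrix. A
state lists, for the next positions, whether a bead of the first (second) row is about to land
there. The operator depends on a spectral parameter `z`, later set to `x * t`, and `qi` stands for
the inverse of `q`. It is defined by recursion on the first letter of the state. -/
def Rop (q qi : A) : A → (List (Bool × Bool) → A) → List (Bool × Bool) → A
  | _, φ, [] => φ []
  | z, φ, (false, false) :: s =>
      (1 - q ^ (2 * s.length) * z) *
        (Rop q qi z (fun u => φ ((false, false) :: u)) s
          - Rop q qi z (fun u => φ ((true, true) :: u)) s)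
      + q ^ (nE s + nF s) *
        Rop q qi (q ^ 2 * z) (fun u => qi ^ (nE u + nF u) * φ ((true, true) :: u)) s
  | z, φ, (true, true) :: s =>
      q ^ (nE s + nF s) *
        (Rop q qi (q ^ 2 * z) (fun u => φ ((false, false) :: u)) s
          - Rop q qi (q ^ 2 * z) (fun u => φ ((true, true) :: u)) s)
  | z, φ, (true, false) :: s =>
      q ^ (nE s + nF s) * Rop q qi (q ^ 2 * z) (fun u => qi ^ nE u * φ ((true, false) :: u)) s
  | z, φ, (false, true) :: s =>
      q ^ (nE s + nF s) * Rop q qi (q ^ 2 * z) (fun u => qi ^ nF u * φ ((false, true) :: u)) s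

lemma Rop_lin (q qi a b : A) (s : List (Bool × Bool)) : ∀ (z : A) (φ ψ : List (Bool × Bool) → A),
    Rop q qi z (fun u => a * φ u + b * ψ u) s = a * Rop q qi z φ s + b * Rop q qi z ψ s := by
  induction s with
  | nil => intros; simp [Rop]
  | cons c s ih =>
    intro z φ ψ
    have e (d : List (Bool × Bool) → A) (c : Bool × Bool) :
        (fun u => d u * (a * φ (c :: u) + b * ψ (c :: u)))
        = fun u => a * (d u * φ (c :: u)) + b * (d u * ψ (c :: u)) := by
      funext u; ring
    rcases c with ⟨_ | _, _ | _⟩ <;> simp only [Rop, e, ih] <;> ring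

lemma Rop_const (q qi a z : A) (φ : List (Bool × Bool) → A) (s : List (Bool × Bool)) :
    Rop q qi z (fun u => a * φ u) s = a * Rop q qi z φ s := by
  have := Rop_lin q qi a 0 s z φ φ
  simpa using this

lemma Rop_add (q qi z : A) (φ ψ : List (Bool × Bool) → A) (s : List (Bool × Bool)) :
    Rop q qi z (fun u => φ u + ψ u) s = Rop q qi z φ s + Rop q qi z ψ s := by
  have := Rop_lin q qi 1 1 s z φ ψ
  simpa using this

lemma Rop_zero (q qi z : A) (s : List (Bool × Bool)) :
    Rop q qi z (fun _ => 0) s = 0 := by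
  have := Rop_lin q qi 0 0 s z (fun _ => 0) (fun _ => 0)
  simpa using this

/-- The operator `Rop`, defined by recursion on the first letter of a state, expressed by recursion
on the last letter. For the last letter `(true, true)` the formula is multiplied by `z`, which
avoids dividing by `z`. -/
lemma Rop_snoc (q qi : A) (hq : q * qi = 1) (s : List (Bool × Bool)) :
    ∀ (z : A) (φ : List (Bool × Bool) → A),
    (Rop q qi z φ (s ++ [(false, false)]) =
      (1 - q ^ (2 * s.length) * z) * Rop q qi z (fun u => φ (u ++ [(false, false)])) s
      + z * q ^ (nE s + nF s) * Rop q qi (q ^ 2 * z) (fun u => φ (u ++ [(true, true)])) s) ∧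
    (z * Rop q qi z φ (s ++ [(true, true)]) =
      Rop q qi (q ^ 2 * z) (fun u => φ (u ++ [(false, false)])) s
      - (1 - q ^ (2 * s.length) * z) * Rop q qi z (fun u => φ (u ++ [(false, false)])) s
      - z * q ^ (nE s + nF s) * Rop q qi (q ^ 2 * z) (fun u => φ (u ++ [(true, true)])) s) ∧
    (Rop q qi z φ (s ++ [(true, false)]) =
      q ^ nF s * Rop q qi (q ^ 2 * z) (fun u => φ (u ++ [(true, false)])) s) ∧
    (Rop q qi z φ (s ++ [(false, true)]) =
      q ^ nE s * Rop q qi (q ^ 2 * z) (fun u => φ (u ++ [(false, true)])) s) := by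
  induction s with
  | nil => intro z φ; refine ⟨?_, ?_, ?_, ?_⟩ <;> simp [Rop] <;> ring
  | cons c s ih =>
    intro z φ
    have i1 := fun z φ => (ih z φ).1
    have i2 := fun z φ => (ih z φ).2.1
    have i3 := fun z φ => (ih z φ).2.2.1
    have i4 := fun z φ => (ih z φ).2.2.2
    have hq2 : q ^ 2 * qi ^ 2 = 1 := by rw [← mul_pow, hq, one_pow]
    have e1 (c : Bool × Bool) (d : Bool × Bool) :
        (fun u => qi ^ (nE u + 1 + (nF u + 1)) * φ (c :: (u ++ [d])))
          = fun u => qi ^ 2 * (qi ^ (nE u + nF u) * φ (c :: (u ++ [d]))) := by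
      funext u; ring
    have e2 (c : Bool × Bool) (d : Bool × Bool) :
        (fun u => qi ^ (nE u + 1 + nF u) * φ (c :: (u ++ [d])))
          = fun u => qi * (qi ^ (nE u + nF u) * φ (c :: (u ++ [d]))) := by
      funext u; ring
    have e3 (c : Bool × Bool) (d : Bool × Bool) :
        (fun u => qi ^ (nE u + (nF u + 1)) * φ (c :: (u ++ [d])))
          = fun u => qi * (qi ^ (nE u + nF u) * φ (c :: (u ++ [d]))) := by
      funext u; ring
    have e4 (c : Bool × Bool) (d : Bool × Bool) :
        (fun u => qi ^ (nE u + 1) * φ (c :: (u ++ [d])))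
          = fun u => qi * (qi ^ (nE u) * φ (c :: (u ++ [d]))) := by
      funext u; ring
    have e5 (c : Bool × Bool) (d : Bool × Bool) :
        (fun u => qi ^ (nF u + 1) * φ (c :: (u ++ [d])))
          = fun u => qi * (qi ^ (nF u) * φ (c :: (u ++ [d]))) := by
      funext u; ring
    have k1 := i2 z (fun u => φ ((false, false) :: u))
    have k2 := i2 z (fun u => φ ((true, true) :: u))
    have k3 := i2 (q ^ 2 * z) (fun u => φ ((false, false) :: u))
    have k4 := i2 (q ^ 2 * z) (fun u => φ ((true, true) :: u))
    have k5 := i2 (q ^ 2 * z) (fun u => qi ^ (nE u + nF u) * φ ((true, true) :: u))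
    have k6 := i2 (q ^ 2 * z) (fun u => qi ^ nE u * φ ((true, false) :: u))
    have k7 := i2 (q ^ 2 * z) (fun u => qi ^ nF u * φ ((false, true) :: u))
    simp only [nE_append, nF_append, nE_cons, nF_cons, nE_nil, nF_nil, if_true, if_false,
        Bool.false_eq_true, zero_add, add_zero, e1, e2, e3, e4, e5, Rop_const] at k5 k6 k7
    have r2 (Y W : A) : q ^ 2 * z * Y * (qi ^ 2 * W) = z * Y * W := by
      linear_combination (z * Y * W) * hq2
    have r1 (Y W : A) : q ^ 2 * z * Y * (qi * W) = q * z * Y * W := by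
      linear_combination (q * z * Y * W) * hq
    have r3 (X Y Z W : A) : X * q ^ 1 * Y * (Z * (qi * W)) = X * Y * (Z * W) := by
      linear_combination (X * Y * Z * W) * hq
    have r4 (X Y Z W : A) : X * (Y * q ^ 1) * (Z * (qi * W)) = X * Y * (Z * W) := by
      linear_combination (X * Y * Z * W) * hq
    rcases c with ⟨_ | _, _ | _⟩ <;> refine ⟨?_, ?_, ?_, ?_⟩
    all_goals
      simp only [Rop, List.cons_append, List.length_append, List.length_cons, List.length_nil,
        nE_append, nF_append, nE_cons, nF_cons, nE_nil, nF_nil, i1, i3, i4, if_true, if_false,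
        Bool.false_eq_true, zero_add, add_zero, e1, e2, e3, e4, e5, Rop_const]
    all_goals clear ih i1 i2 i3 i4 e1 e2 e3 e4 e5
    all_goals simp only [mul_add, pow_add, pow_mul] at *
    all_goals simp only [r1, r2, r3, r4] at *
    all_goals first
      | ring1
      | linear_combination (1 - (q ^ 2) ^ s.length * (q ^ 2 * z)) * (k1 - k2) +
          q ^ nE s * q ^ nF s * k5
      | linear_combination q ^ nE s * q ^ nF s * (k3 - k4)
      | linear_combination q ^ nE s * q ^ nF s * k6
      | linear_combination q ^ nE s * q ^ nF s * k7
end Intertwiner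

/-! ### The local exchange relation -/

section Intertwiner2
variable {A : Type*} [CommRing A]

/-- The local weight of one row at one position. Here `a` and `g` tell whether there is a bead at
this position before and after the move, `e` whether a bead lands here, and `E` is the number of
beads that are jumping over this position. A bead present (`a` or `e`) either stays, or jumps on
(weight `x`); in both cases each jump over it contributes one unit of spin. Configurations with two
beads at the position, or with `g` but no bead, have weight `0`. -/
def lw (q x : A) (a e g : Bool) (E : ℕ) : A :=
  if a && e then 0 else if a || e then q ^ E * (if g then 1 else x) else (if g then 0 else 1)

/-- Whether the bead at a position jumps on: a bead is there (`a` or `e`) and does not stay (`g`). -/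
def nx (a e g : Bool) : Bool := (a || e) && !g

/-- One step of the two-row transfer matrix in which the rows start from the bits `a` and `b` and end in
a common bit `g`, which is summed over. -/
def Lop (q x t : A) (a b : Bool) (φ : List (Bool × Bool) → A) : List (Bool × Bool) → A
  | [] => 0
  | c :: s => ∑ g : Bool, lw q x a c.1 g (nE s) * lw q t b c.2 g (nF s) *
      φ (s ++ [(nx a c.1 g, nx b c.2 g)])

/-- One step of the two-row transfer matrix in which the rows start from a common bit `d`, which is
summed over, and end in `b` and `a`, respectively. -/
def Mop (q x t : A) (a b : Bool) (φ : List (Bool × Bool) → A) : List (Bool × Bool) → A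
  | [] => 0
  | c :: s => ∑ d : Bool, lw q x d c.1 b (nE s) * lw q t d c.2 a (nF s) *
      φ (s ++ [(nx d c.1 b, nx d c.2 a)])

lemma Rop_sub (q qi z : A) (φ ψ : List (Bool × Bool) → A) (s : List (Bool × Bool)) :
    Rop q qi z φ s - Rop q qi z ψ s = Rop q qi z (fun u => φ u - ψ u) s := by
  have := Rop_lin q qi 1 (-1) s z φ ψ
  simp only [one_mul, neg_mul, ← sub_eq_add_neg] at this
  exact this.symm

/-- The local exchange relation: `Rop` with spectral parameter `x * t` intertwines the two kinds of
transfer matrices. The cases are reduced to `Rop_snoc` by expanding `Rop` along the first letter. -/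
lemma intertwine (q qi : A) (hq : q * qi = 1) (x t : A) (a b : Bool)
    (φ : List (Bool × Bool) → A) :
    Lop q x t a b (Rop q qi (x * t) φ) = Rop q qi (x * t) (Mop q x t a b φ) := by
  funext s
  have hqp (k : ℕ) : qi ^ k * q ^ k = 1 := by rw [← mul_pow, mul_comm, hq, one_pow]
  have c1 (k l : ℕ) (X : A) : qi ^ (k + l) * (q ^ k * q ^ l * X) = X := by
    linear_combination X * qi ^ k * q ^ k * hqp l + X * hqp k
  have c2 (k : ℕ) (X : A) : qi ^ k * (q ^ k * X) = X := by
    linear_combination X * hqp k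
  cases s with
  | nil => simp [Lop, Rop, Mop]
  | cons c s =>
    have F0 : (fun u => Mop q x t a b φ ((false, false) :: u) - Mop q x t a b φ ((true, true) :: u))
        = fun u => (if a || b then 0 else 1) * φ (u ++ [(false, false)]) := by
      funext u
      cases a <;> cases b <;> simp [Mop, lw, nx]  <;> ring
    have G0 : (fun u => qi ^ (nE u + nF u) * Mop q x t a b φ ((true, true) :: u))
        = fun u => ((if b then 1 else x) * (if a then 1 else t)) * φ (u ++ [(!b, !a)]) := by
      funext u
      rw [← c1 (nE u) (nF u) (((if b then 1 else x) * (if a then 1 else t)) * φ (u ++ [(!b, !a)]))]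
      cases a <;> cases b <;> simp [Mop, lw, nx]  <;> ring
    have G1 : (fun u => qi ^ (nE u) * Mop q x t a b φ ((true, false) :: u))
        = fun u => ((if b then 1 else x) * (if a then 0 else 1)) * φ (u ++ [(!b, false)]) := by
      funext u
      rw [← c2 (nE u) (((if b then 1 else x) * (if a then 0 else 1)) * φ (u ++ [(!b, false)]))]
      cases a <;> cases b <;> simp [Mop, lw, nx]  <;> ring
    have G2 : (fun u => qi ^ (nF u) * Mop q x t a b φ ((false, true) :: u))
        = fun u => ((if a then 1 else t) * (if b then 0 else 1)) * φ (u ++ [(false, !a)]) := by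
      funext u
      rw [← c2 (nF u) (((if a then 1 else t) * (if b then 0 else 1)) * φ (u ++ [(false, !a)]))]
      cases a <;> cases b <;> simp [Mop, lw, nx]  <;> ring
    obtain ⟨j1, j2, j3, j4⟩ := Rop_snoc q qi hq s (x * t) φ
    rcases c with ⟨_ | _, _ | _⟩ <;>
      simp only [Rop, Rop_sub, F0, G0, G1, G2, Rop_const] <;> clear F0 G0 G1 G2 <;>
      cases a <;> cases b <;>
      simp [Lop, lw, nx, j1, j3, j4, Rop_sub, Rop_const] <;>
      first
      | ring1
      | linear_combination q ^ nE s * q ^ nF s * j2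
      | linear_combination j2
end Intertwiner2

/-! ### Boundary behaviour of the intertwining operator -/

section Ends
variable {A : Type*} [CommRing A]

/-- The composition of the steps `Lop` along a word of pairs of bits. -/
def Lops (q x t : A) (φ : List (Bool × Bool) → A) :
    List (Bool × Bool) → List (Bool × Bool) → A
  | [] => φ
  | c :: w => Lop q x t c.1 c.2 (Lops q x t φ w)

/-- The composition of the steps `Mop` along a word of pairs of bits. -/
def Mops (q x t : A) (φ : List (Bool × Bool) → A) :
    List (Bool × Bool) → List (Bool × Bool) → A
  | [] => φ
  | c :: w => Mop q x t c.1 c.2 (Mops q x t φ w)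

/-- The indicator function of the state in which no bead is jumping. -/
def vac (s : List (Bool × Bool)) : A := if nE s + nF s = 0 then 1 else 0

/-- The state (or word) with `n` letters equal to `(false, false)`. -/
def zs (n : ℕ) : List (Bool × Bool) := List.replicate n (false, false)

lemma nE_zs (n : ℕ) : nE (zs n) = 0 := by simp [nE, zs]
lemma nF_zs (n : ℕ) : nF (zs n) = 0 := by simp [nF, zs]
lemma zs_succ (n : ℕ) : zs (n + 1) = (false, false) :: zs n := rfl
lemma zs_succ' (n : ℕ) : zs (n + 1) = zs n ++ [(false, false)] := List.replicate_succ'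
lemma length_zs (n : ℕ) : (zs n).length = n := by simp [zs]

lemma Lops_append (q x t : A) (φ w v) :
    Lops q x t φ (w ++ v) = Lops q x t (Lops q x t φ v) w := by
  induction w with
  | nil => rfl
  | cons c w ih => simp [Lops, ih]

lemma Mops_append (q x t : A) (φ w v) :
    Mops q x t φ (w ++ v) = Mops q x t (Mops q x t φ v) w := by
  induction w with
  | nil => rfl
  | cons c w ih => simp [Mops, ih]

lemma Lops_Rop (q qi : A) (hq : q * qi = 1) (x t : A) (φ w) :
    Lops q x t (Rop q qi (x * t) φ) w = Rop q qi (x * t) (Mops q x t φ w) := by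
  induction w with
  | nil => rfl
  | cons c w ih => simp only [Lops, Mops, ih, intertwine q qi hq]

lemma Lops_sub (q x t c : A) (φ ψ w) :
    Lops q x t (fun s => φ s - c * ψ s) w
      = fun s => Lops q x t φ w s - c * Lops q x t ψ w s := by
  induction w with
  | nil => rfl
  | cons d w ih =>
    funext s
    cases s with
    | nil => simp [Lops, Lop]
    | cons e s =>
      simp only [Lops, ih, Lop, mul_sub, Finset.sum_sub_distrib, Finset.mul_sum]
      congr 1
      exact Finset.sum_congr rfl fun _ _ => by ring

/-- On the far left, where both rows end in beads, the empty state is preserved by the transfer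
matrix. -/
lemma Mops_ones_zs (q x t : A) (n : ℕ) (hn : 1 ≤ n) (φ) (k : ℕ) :
    Mops q x t φ (List.replicate k (true, true)) (zs n) = φ (zs n) := by
  induction k with
  | zero => rfl
  | succ k ih =>
    rw [← ih]
    obtain ⟨m, rfl⟩ : ∃ m, n = m + 1 := ⟨n - 1, by omega⟩
    rw [List.replicate_succ, Mops]
    conv_rhs => rw [zs_succ']
    rw [zs_succ]
    simp [Mop, lw, nx, nE_zs, nF_zs]

/-- On the far left the intertwining operator acts as the identity: it is absorbed by `n` steps of the
transfer matrix at positions carrying beads. -/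
lemma Rop_ones_zs (q qi : A) (hq : q * qi = 1) (x t : A) (φ) (k : ℕ) :
    ∀ (z : A) (j : ℕ), Rop q qi z
      (fun s => Mops q x t φ (List.replicate k (true, true)) (s ++ zs j)) (zs k)
      = φ (zs (k + j)) := by
  induction k with
  | zero => intro z j; simp [Rop, zs, Mops]
  | succ k ih =>
    intro z j
    have hqp (k : ℕ) : qi ^ k * q ^ k = 1 := by rw [← mul_pow, mul_comm, hq, one_pow]
    rw [zs_succ, Rop, nE_zs, nF_zs]
    have e1 : (fun u => Mops q x t φ (List.replicate (k + 1) (true, true))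
          ((false, false) :: u ++ zs j)) =
        fun u => Mops q x t φ (List.replicate (k + 1) (true, true))
          ((true, true) :: u ++ zs j) := by
      funext u
      simp [List.replicate_succ, Mops, Mop, lw, nx]
    have e2 : (fun u => qi ^ (nE u + nF u) * Mops q x t φ (List.replicate (k + 1) (true, true))
          ((true, true) :: u ++ zs j)) =
        fun u => Mops q x t φ (List.replicate k (true, true)) (u ++ zs (j + 1)) := by
      funext u
      simp [List.replicate_succ, Mops, Mop, lw, nx, nE_zs, nF_zs, zs_succ']
      linear_combination (Mops q x t φ (List.replicate k (true, true))
        (u ++ (zs j ++ [(false, false)]))) *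
        (qi ^ (nE u) * q ^ (nE u) * hqp (nF u) + hqp (nE u))
    rw [e1, e2, ih]
    simp only [sub_self, mul_zero, zero_add, add_zero, pow_zero, one_mul]
    congr 2; omega

/-- On the far right the intertwining operator multiplies the vacuum by the scalar
`∏ (1 - q^{2j} z)`, as long as no bead of the second row is jumping. -/
lemma Rop_vac (q qi : A) (s : List (Bool × Bool)) (h : nF s = 0) : ∀ z : A,
    Rop q qi z vac s =
      (∏ j ∈ Finset.range s.length, (1 - q ^ (2 * j) * z)) * vac s := by
  induction s with
  | nil => intro z; simp [Rop]
  | cons c s ih =>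
    intro z
    rcases c with ⟨_ | _, _ | _⟩
    · have ih := ih (by simpa using h)
      have e1 : (fun u => vac ((false, false) :: u) : List (Bool × Bool) → A) = vac := by
        funext u; simp [vac]
      have e2 : (fun u => vac ((true, true) :: u) : List (Bool × Bool) → A) = fun _ => 0 := by
        funext u; simp [vac]
      have e3 : (fun u => qi ^ (nE u + nF u) * vac ((true, true) :: u) :
          List (Bool × Bool) → A) = fun _ => 0 := by
        funext u; simp [vac]
      rw [Rop, e1, e2, e3, Rop_zero, Rop_zero, ih, List.length_cons, Finset.prod_range_succ]
      have e4 : vac ((false, false) :: s) = (vac s : A) := congrFun e1 s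
      rw [e4]; ring1
    · simp at h
    · have e3 : (fun u => qi ^ (nE u) * vac ((true, false) :: u) :
          List (Bool × Bool) → A) = fun _ => 0 := by
        funext u; simp [vac]
      rw [Rop, e3, Rop_zero]
      simp [vac]
    · simp at h

/-- The inductive step of `Lops_zs_n_dvd`: at an empty position a landing bead of the second row jumps
on, at the price of a factor `t`. -/
lemma Lop_zero_dvd (q x t : A) (n v i : ℕ) (hi : i < n) (ψ : List (Bool × Bool) → A)
    (h0 : ∀ s, s.length = n → nF s = 0 → ψ s = 0)
    (h1 : ∀ s, s.length = n → t ^ v ∣ ψ s)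
    (h2 : ∀ s, s.length = n → nF (s.drop i) = 0 → t ^ (v + 1) ∣ ψ s) :
    (∀ s, s.length = n → nF s = 0 → Lop q x t false false ψ s = 0) ∧
    (∀ s, s.length = n → t ^ v ∣ Lop q x t false false ψ s) ∧
    (∀ s, s.length = n → nF (s.drop (i + 1)) = 0 → t ^ (v + 1) ∣ Lop q x t false false ψ s) := by
  refine ⟨?_, ?_, ?_⟩
  · rintro (_ | ⟨⟨e, f⟩, s⟩) hs hF
    · rfl
    · have : f = false := by cases f <;> simp_all
      subst this
      have hF' : nF s = 0 := by simpa using hF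
      refine Finset.sum_eq_zero fun g _ => ?_
      rw [h0 _ (by simpa using hs) (by simp [hF', nx]), mul_zero]
  · rintro (_ | ⟨⟨e, f⟩, s⟩) hs
    · exact dvd_zero _
    · exact Finset.dvd_sum fun g _ => Dvd.dvd.mul_left (h1 _ (by simpa using hs)) _
  · rintro (_ | ⟨⟨e, f⟩, s⟩) hs hF
    · exact dvd_zero _
    · refine Finset.dvd_sum fun g _ => ?_
      have hl : (s ++ [(nx false e g, nx false f g)]).length = n := by simpa using hs
      have hi' : i ≤ s.length := by simp at hs; omega
      have hF' : nF (s.drop i) = 0 := by simpa using hF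
      by_cases hfg : f = true ∧ g = false
      · obtain ⟨rfl, rfl⟩ := hfg
        obtain ⟨y, hy⟩ := h1 _ hl
        rw [hy]
        refine ⟨lw q x false e false (nE s) * q ^ nF s * y, ?_⟩
        cases e <;> simp [lw, pow_succ] <;> ring1
      · refine Dvd.dvd.mul_left (h2 _ hl ?_) _
        rw [List.drop_append_of_le_length hi', nF_append, hF']
        cases f <;> cases g <;> simp_all [nx]

/-- Passing `n` empty positions either leaves no jump in the second row or produces one more factor
`t`, since every bead landing there must jump again. -/
lemma Lops_zs_n_dvd (q x t : A) (n v : ℕ) (ψ : List (Bool × Bool) → A)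
    (h0 : ∀ s, s.length = n → nF s = 0 → ψ s = 0)
    (h1 : ∀ s, s.length = n → t ^ v ∣ ψ s) :
    (∀ s, s.length = n → nF s = 0 → Lops q x t ψ (zs n) s = 0) ∧
    (∀ s, s.length = n → t ^ (v + 1) ∣ Lops q x t ψ (zs n) s) := by
  have key : ∀ i ≤ n, 
    (∀ s, s.length = n → nF s = 0 → Lops q x t ψ (zs i) s = 0) ∧
    (∀ s, s.length = n → t ^ v ∣ Lops q x t ψ (zs i) s) ∧
    (∀ s, s.length = n → nF (s.drop i) = 0 → t ^ (v + 1) ∣ Lops q x t ψ (zs i) s) := by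
    intro i
    induction i with
    | zero =>
      intro _
      exact ⟨h0, h1, fun s hs hF => by
        have : Lops q x t ψ (zs 0) s = 0 := h0 s hs (by simpa using hF)
        rw [this]; exact dvd_zero _⟩
    | succ i ih =>
      intro hi
      obtain ⟨a, b, c⟩ := ih (by omega)
      exact Lop_zero_dvd q x t n v i (by omega) _ a b c
  obtain ⟨a, b, c⟩ := key n le_rfl
  exact ⟨a, fun s hs => c s hs (by simp [← hs])⟩

lemma Lops_zs_dvd (q x t : A) (n J : ℕ) (ψ : List (Bool × Bool) → A)
    (h0 : ∀ s, s.length = n → nF s = 0 → ψ s = 0) :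
    (∀ s, s.length = n → nF s = 0 → Lops q x t ψ (zs (n * J)) s = 0) ∧
    (∀ s, s.length = n → t ^ J ∣ Lops q x t ψ (zs (n * J)) s) := by
  induction J with
  | zero => exact ⟨h0, fun s hs => by simp⟩
  | succ J ih =>
    have : zs (n * (J + 1)) = zs n ++ zs (n * J) := by
      rw [zs, zs, zs, ← List.replicate_add]; congr 1; ring
    rw [this, Lops_append]
    exact Lops_zs_n_dvd q x t n J _ ih.1 ih.2

lemma Lops_dvd (q x t : A) (n J : ℕ) (ψ : List (Bool × Bool) → A)
    (h : ∀ s, s.length = n → t ^ J ∣ ψ s) (w) :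
    ∀ s, s.length = n → t ^ J ∣ Lops q x t ψ w s := by
  induction w with
  | nil => exact h
  | cons c w ih =>
    rintro (_ | ⟨e, s⟩) hs
    · exact dvd_zero _
    · rw [Lops, Lop]
      exact Finset.dvd_sum fun g _ => Dvd.dvd.mul_left (ih _ (by simpa using hs)) _

/-- The commutation relation of the two transfer matrices modulo `t ^ J`, for words that begin with
`n` pairs of beads and end with `n * J` empty positions. -/
theorem transfer_comm (q qi : A) (hq : q * qi = 1) (x t : A) (n J : ℕ) (hn : 1 ≤ n)
    (w : List (Bool × Bool)) :
    t ^ J ∣ Mops q x t vac (List.replicate n (true, true) ++ (w ++ zs (n * J))) (zs n) -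
      (∏ j ∈ Finset.range n, (1 - q ^ (2 * j) * (x * t))) *
        Lops q x t vac (List.replicate n (true, true) ++ (w ++ zs (n * J))) (zs n) := by
  set c := (∏ j ∈ Finset.range n, (1 - q ^ (2 * j) * (x * t))) with hc
  have e1 : Mops q x t vac (List.replicate n (true, true) ++ (w ++ zs (n * J))) (zs n)
      = Lops q x t (Rop q qi (x * t) vac)
        (List.replicate n (true, true) ++ (w ++ zs (n * J))) (zs n) := by
    rw [Lops_Rop q qi hq, Mops_append, Mops_ones_zs _ _ _ _ hn]
    have := Rop_ones_zs q qi hq x t (Mops q x t vac (w ++ zs (n * J))) n (x * t) 0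
    simp only [zs, List.replicate_zero, List.append_nil, add_zero] at this ⊢
    exact this.symm
  rw [e1]
  have := congrFun (Lops_sub q x t c (Rop q qi (x * t) vac) vac
    (List.replicate n (true, true) ++ (w ++ zs (n * J)))) (zs n)
  rw [← this, Lops_append, Lops_append]
  refine Lops_dvd _ _ _ n J _ (Lops_dvd _ _ _ n J _ (Lops_zs_dvd q x t n J _ ?_).2 w) _ _
    (length_zs n)
  intro s hs hF
  rw [Rop_vac q qi s hF, hs, sub_self]
end Ends

/-! ### One-row transfer matrices -/

section Lines
variable {A : Type*} [CommRing A]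

/-- The number of entries `true`. -/
def cnt (r : List Bool) : ℕ := r.countP id

/-- The pairs of bits of `α` and `β` at the `M` positions starting at `p`. -/
def word (α β : ℤ → Bool) : ℤ → ℕ → List (Bool × Bool)
  | _, 0 => []
  | p, M + 1 => (α p, β p) :: word α β (p + 1) M

/-- The bits of `e` at the `n` positions starting at `p`. -/
def win (e : ℤ → Bool) : ℤ → ℕ → List Bool
  | _, 0 => []
  | p, n + 1 => e p :: win e (p + 1) n

/-- The one-row transfer matrix from the bits `α` to the bits `γ` at the `M` positions starting at `p`.
The list records the positions where jumping beads will land; no jump may be pending at the end. -/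
def line (q x : A) (α γ : ℤ → Bool) : ℤ → ℕ → List Bool → A
  | _, 0, r => if cnt r = 0 then 1 else 0
  | _, _ + 1, [] => 0
  | p, M + 1, e :: r => lw q x (α p) e (γ p) (cnt r) *
      line q x α γ (p + 1) M (r ++ [nx (α p) e (γ p)])

lemma cnt_cons (b : Bool) (r) : cnt (b :: r) = cnt r + if b then 1 else 0 := by
  simp [cnt, List.countP_cons]

lemma win_snoc (e : ℤ → Bool) (n : ℕ) : ∀ p, win e p (n + 1) = win e p n ++ [e (p + n)] := by
  induction n with
  | zero => intro p; simp [win]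
  | succ n ih =>
    intro p
    rw [win, ih, win]
    simp; congr 1; ring

lemma length_win (e : ℤ → Bool) (n : ℕ) : ∀ p, (win e p n).length = n := by
  induction n with
  | zero => intro p; rfl
  | succ n ih => intro p; simp [win, ih]

lemma Ico_succ_left (p : ℤ) (n : ℕ) :
    Finset.Ico p (p + ((n + 1 : ℕ) : ℤ)) = insert p (Finset.Ico (p + 1) (p + 1 + (n : ℤ))) := by
  ext j; simp; omega

lemma cnt_win (e : ℤ → Bool) (n : ℕ) : ∀ p,
    cnt (win e p n) = ((Finset.Ico p (p + (n : ℤ))).filter fun j => e j = true).card := by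
  induction n with
  | zero => intro p; simp [win, cnt]
  | succ n ih =>
    intro p
    rw [win, cnt_cons, ih, Ico_succ_left, Finset.filter_insert]
    split_ifs <;> simp

lemma win_congr {e e' : ℤ → Bool} (n : ℕ) : ∀ p : ℤ, (∀ j : ℤ, p ≤ j → j < p + n → e j = e' j) →
    win e p n = win e' p n := by
  induction n with
  | zero => intros; rfl
  | succ n ih =>
    intro p h
    rw [win, win, h p le_rfl (by push_cast; omega), ih (p + 1) fun j h1 h2 =>
      h j (by omega) (by push_cast; omega)]

lemma line_congr (q x : A) {α γ α' γ' : ℤ → Bool} (M : ℕ) : ∀ (p : ℤ) r,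
    (∀ j : ℤ, p ≤ j → j < p + M → α j = α' j) → (∀ j : ℤ, p ≤ j → j < p + M → γ j = γ' j) →
    line q x α γ p M r = line q x α' γ' p M r := by
  induction M with
  | zero => intros; rfl
  | succ M ih =>
    rintro p (_ | ⟨e, r⟩) h1 h2
    · rfl
    · rw [line, line, h1 p le_rfl (by push_cast; omega), h2 p le_rfl (by push_cast; omega),
        ih (p + 1) _ (fun j a b => h1 j (by omega) (by push_cast; omega))
        (fun j a b => h2 j (by omega) (by push_cast; omega))]

/-- The indicator function of a finite set of positions. -/
def ind (g : Finset ℤ) (j : ℤ) : Bool := decide (j ∈ g)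

lemma nE_eq_cnt (s) : nE s = cnt (s.map Prod.fst) := by simp [nE, cnt, List.countP_map]
lemma nF_eq_cnt (s) : nF s = cnt (s.map Prod.snd) := by simp [nF, cnt, List.countP_map]

lemma vac_eq (s) : (vac s : A) = (if cnt (s.map Prod.fst) = 0 then 1 else 0) *
    (if cnt (s.map Prod.snd) = 0 then 1 else 0) := by
  rw [vac, nE_eq_cnt, nF_eq_cnt]
  split_ifs <;> simp_all

lemma sum_powerset_Ico (F : Finset ℤ → A) (p : ℤ) (M : ℕ) :
    ∑ g ∈ (Finset.Ico p (p + ((M + 1 : ℕ) : ℤ))).powerset, F g =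
    ∑ g ∈ (Finset.Ico (p + 1) (p + 1 + (M : ℤ))).powerset, (F g + F (insert p g)) := by
  rw [Ico_succ_left, Finset.sum_powerset_insert (by simp), Finset.sum_add_distrib]

/-- The two-row transfer matrix `Lops` is the sum over all common final configurations of the products
of two one-row transfer matrices. -/
lemma Lops_word (q x t : A) (α β : ℤ → Bool) (M : ℕ) : ∀ p s,
    Lops q x t vac (word α β p M) s =
      ∑ g ∈ (Finset.Ico p (p + (M : ℤ))).powerset,
        line q x α (ind g) p M (s.map Prod.fst) * line q t β (ind g) p M (s.map Prod.snd) := by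
  induction M with
  | zero => intro p s; simp [word, Lops, line, vac_eq]
  | succ M ih =>
    rintro p (_ | ⟨⟨e, f⟩, s⟩)
    · simp [word, Lops, Lop, line]
    · rw [sum_powerset_Ico, word, Lops, Lop]
      simp only [Fintype.sum_bool, ih, List.map_cons, line, nE_eq_cnt, nF_eq_cnt,
        List.map_append, List.map_nil]
      rw [add_comm, Finset.mul_sum, Finset.mul_sum, ← Finset.sum_add_distrib]
      refine Finset.sum_congr rfl fun g hg => ?_
      have hp : p ∉ g := fun h => by
        have := Finset.mem_powerset.1 hg h; simp at this
      have h1 : ind g p = false := by simp [ind, hp]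
      have h2 : ind (insert p g) p = true := by simp [ind]
      have h3 : ∀ j, p + 1 ≤ j → j < p + 1 + M → ind (insert p g) j = ind g j := by
        intro j hj _; simp [ind]; omega
      rw [h1, h2, line_congr q x M (p + 1) _ (fun _ _ _ => rfl) h3,
        line_congr q t M (p + 1) _ (fun _ _ _ => rfl) h3]
      ring

/-- The two-row transfer matrix `Mops` is the sum over all common initial configurations of the
products of two one-row transfer matrices. -/
lemma Mops_word (q x t : A) (α β : ℤ → Bool) (M : ℕ) : ∀ p s,
    Mops q x t vac (word α β p M) s =
      ∑ g ∈ (Finset.Ico p (p + (M : ℤ))).powerset,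
        line q x (ind g) β p M (s.map Prod.fst) * line q t (ind g) α p M (s.map Prod.snd) := by
  induction M with
  | zero => intro p s; simp [word, Mops, line, vac_eq]
  | succ M ih =>
    rintro p (_ | ⟨⟨e, f⟩, s⟩)
    · simp [word, Mops, Mop, line]
    · rw [sum_powerset_Ico, word, Mops, Mop]
      simp only [Fintype.sum_bool, ih, List.map_cons, line, nE_eq_cnt, nF_eq_cnt,
        List.map_append, List.map_nil]
      rw [add_comm, Finset.mul_sum, Finset.mul_sum, ← Finset.sum_add_distrib]
      refine Finset.sum_congr rfl fun g hg => ?_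
      have hp : p ∉ g := fun h => by
        have := Finset.mem_powerset.1 hg h; simp at this
      have h1 : ind g p = false := by simp [ind, hp]
      have h2 : ind (insert p g) p = true := by simp [ind]
      have h3 : ∀ j, p + 1 ≤ j → j < p + 1 + M → ind (insert p g) j = ind g j := by
        intro j hj _; simp [ind]; omega
      rw [h1, h2, line_congr q x M (p + 1) _ h3 (fun _ _ _ => rfl),
        line_congr q t M (p + 1) _ h3 (fun _ _ _ => rfl)]
      ring

/-- The one-row transfer matrix as a product of local weights, along the function `e` that tells where
beads land. -/
lemma line_win (q x : A) (α γ e : ℤ → Bool) (n : ℕ) (M : ℕ) : ∀ p : ℤ,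
    (∀ j : ℤ, p ≤ j → j < p + M → e (j + (n + 1 : ℕ)) = nx (α j) (e j) (γ j)) →
    line q x α γ p M (win e p (n + 1)) =
      (∏ j ∈ Finset.Ico p (p + (M : ℤ)), lw q x (α j) (e j) (γ j) (cnt (win e (j + 1) n))) *
        (if cnt (win e (p + M) (n + 1)) = 0 then 1 else 0) := by
  induction M with
  | zero => intro p _; simp [line]
  | succ M ih =>
    intro p h
    rw [win, line, ← h p le_rfl (by push_cast; omega)]
    have : win e (p + 1) n ++ [e (p + (n + 1 : ℕ))] = win e (p + 1) (n + 1) := by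
      rw [win_snoc]; congr 3; push_cast; ring
    rw [this, ih (p + 1) (fun j a b => h j (by omega) (by push_cast; omega)), Ico_succ_left,
      Finset.prod_insert (by simp), mul_assoc]
    have : p + 1 + (M : ℤ) = p + ((M + 1 : ℕ) : ℤ) := by push_cast; ring
    rw [this]

lemma exists_win (α γ : ℤ → Bool) (n : ℕ) (M : ℕ) : ∀ (p : ℤ) r, r.length = n + 1 →
    ∃ e : ℤ → Bool, win e p (n + 1) = r ∧
      ∀ j : ℤ, p ≤ j → j < p + M → e (j + (n + 1 : ℕ)) = nx (α j) (e j) (γ j) := by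
  have base : ∀ (r : List Bool) (p : ℤ), ∃ e : ℤ → Bool, win e p r.length = r := by
    intro r
    induction r with
    | nil => intro p; exact ⟨fun _ => false, rfl⟩
    | cons b r ih =>
      intro p
      obtain ⟨e, he⟩ := ih (p + 1)
      refine ⟨Function.update e p b, ?_⟩
      rw [List.length_cons, win, Function.update_self]
      congr 1
      conv_rhs => rw [← he]
      exact win_congr _ _ fun j h1 _ => Function.update_of_ne (by omega) _ _
  induction M with
  | zero =>
    intro p r hr
    obtain ⟨e, he⟩ := base r p
    exact ⟨e, hr ▸ he, fun j h1 h2 => by simp at h2; omega⟩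
  | succ M ih =>
    rintro p (_ | ⟨b, r⟩) hr
    · simp at hr
    · obtain ⟨e, he, hrec⟩ := ih (p + 1) (r ++ [nx (α p) b (γ p)]) (by simpa using hr)
      rw [win_snoc] at he
      have hr' : r.length = n := by simpa using hr
      obtain ⟨h1, h2⟩ := List.append_inj he (by rw [length_win, hr'])
      have hu : ∀ j, j ≠ p → Function.update e p b j = e j :=
        fun j hj => Function.update_of_ne hj _ _
      refine ⟨Function.update e p b, ?_, ?_⟩
      · rw [win, Function.update_self]
        congr 1
        rw [← h1]
        exact win_congr _ _ fun j h1 _ => hu j (by omega)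
      · intro j hj1 hj2
        rw [hu _ (by push_cast; omega)]
        by_cases hj : j = p
        · subst hj
          rw [Function.update_self]
          have : e (j + 1 + n) = nx (α j) b (γ j) := by simpa using h2
          rw [← this]; congr 1; push_cast; ring
        · rw [hu j hj]
          exact hrec j (by omega) (by push_cast at hj2; omega)
end Lines

/-! ### Strips as moves of beads -/

section Strips
variable {A : Type*} [CommRing A]

/-- Horizontal `n`-ribbon strips in terms of beads: the bits `γ` arise from `α` by beads jumping `n`
places to the right, and `E` is the set of the positions on which beads land. At each position at
most one bead is present (from `α`, or landing), and it either stays (`γ`) or jumps on. -/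
def HSb (n : ℕ) (α γ : ℤ → Bool) (E : Finset ℤ) : Prop :=
  ∀ j : ℤ, ¬(α j = true ∧ j ∈ E) ∧ ¬(γ j = true ∧ j + n ∈ E) ∧
    ((α j = true ∨ j ∈ E) ↔ (γ j = true ∨ j + n ∈ E))

/-- The spin of a strip in terms of beads: each jump counts the beads that it passes, where a bead that
has landed counts as present. -/
noncomputable def spinb (n : ℕ) (α : ℤ → Bool) (E : Finset ℤ) : ℕ :=
  ∑ i ∈ E, ((Finset.Ioo (i - n) i).filter fun j => α j = true ∨ j ∈ E).card

lemma shift_empty (n : ℕ) (hn : 1 ≤ n) (S : Finset ℤ) (h : ∀ j ∈ S, j + n ∈ S) : S = ∅ := by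
  by_contra hS
  have hS' := Finset.nonempty_iff_ne_empty.2 hS
  have := S.le_max' _ (h _ (S.max'_mem hS'))
  omega

lemma HSb_unique {n : ℕ} (hn : 1 ≤ n) {α γ : ℤ → Bool} {E E' : Finset ℤ}
    (h : HSb n α γ E) (h' : HSb n α γ E') : E = E' := by
  have := shift_empty n hn (symmDiff E E') (fun j hj => by
    have a := h j; have b := h' j
    rw [Finset.mem_symmDiff] at *
    grind)
  exact symmDiff_eq_bot.1 this

lemma HSb_range {n : ℕ} (hn : 1 ≤ n) {α γ : ℤ → Bool} {E : Finset ℤ} (h : HSb n α γ E)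
    {p r : ℤ} (hγ : ∀ j < p, γ j = true) (hγ' : ∀ j, r ≤ j → γ j = false) :
    ∀ j ∈ E, p + n ≤ j ∧ j < r := by
  intro j hj
  constructor
  · by_contra hlt
    have := (h (j - n)).2.1
    simp [hγ (j - n) (by omega), hj] at this
  · by_contra hge
    have := shift_empty n hn (E.filter fun j => r ≤ j) (fun i hi => by
      rw [Finset.mem_filter] at *
      have := h i
      have := hγ' i hi.2
      refine ⟨?_, by omega⟩
      simp_all)
    have h2 : j ∈ E.filter fun j => r ≤ j := by rw [Finset.mem_filter]; exact ⟨hj, by omega⟩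
    simp [this] at h2

lemma win_false (p : ℤ) (n : ℕ) : win (fun _ => false) p n = List.replicate n false := by
  induction n generalizing p with
  | zero => rfl
  | succ n ih => rw [win, ih]; rfl

lemma win_zero {e : ℤ → Bool} {p : ℤ} {n : ℕ} :
    cnt (win e p n) = 0 ↔ ∀ j, p ≤ j → j < p + n → e j = false := by
  rw [cnt_win, Finset.card_eq_zero, Finset.filter_eq_empty_iff]
  simp

/-- The one-row transfer matrix evaluates to `q^spin x^(number of jumps)` on a strip. -/
lemma line_of_HSb (q x : A) {n : ℕ} (hn : 1 ≤ n) {α γ : ℤ → Bool} {E : Finset ℤ} {p : ℤ} {M : ℕ}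
    (h : HSb n α γ E) (hγ : ∀ j < p, γ j = true) (hγ' : ∀ j, p + M ≤ j → γ j = false) :
    line q x α γ p M (List.replicate n false) = q ^ spinb n α E * x ^ E.card := by
  have hE := HSb_range hn h hγ hγ'
  obtain ⟨m, rfl⟩ : ∃ m, n = m + 1 := ⟨n - 1, by omega⟩
  have e1 : win (ind E) p (m + 1) = List.replicate (m + 1) false := by
    rw [← win_false p]
    refine win_congr _ _ fun j h1 h2 => ?_
    simp only [ind, decide_eq_false_iff_not]
    intro hj; have := hE j hj; omega
  have hrec : ∀ j : ℤ, ind E (j + (m + 1 : ℕ)) = nx (α j) (ind E j) (γ j) := by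
    intro j
    have := h j
    simp only [ind, nx]
    revert this
    generalize j + ((m + 1 : ℕ) : ℤ) = i
    cases α j <;> cases γ j <;> by_cases h1 : j ∈ E <;> by_cases h2 : i ∈ E <;>
      simp [h1, h2]
  have e2 : cnt (win (ind E) (p + M) (m + 1)) = 0 := by
    rw [win_zero]
    intro j h1 h2
    simp only [ind, decide_eq_false_iff_not]
    intro hj; have := hE j hj; omega
  rw [← e1, line_win q x α γ (ind E) m M p (fun j _ _ => hrec j), e2, if_pos rfl, mul_one]
  have e3 : ∀ j : ℤ, lw q x (α j) (ind E j) (γ j) (cnt (win (ind E) (j + 1) m)) =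
      q ^ (if α j = true ∨ j ∈ E then cnt (win (ind E) (j + 1) m) else 0) *
      x ^ (if j + ((m + 1 : ℕ) : ℤ) ∈ E then 1 else 0) := by
    intro j
    have := h j
    generalize cnt (win (ind E) (j + 1) m) = k
    simp only [ind, lw]
    revert this
    generalize j + ((m + 1 : ℕ) : ℤ) = i
    cases α j <;> cases γ j <;> by_cases h1 : j ∈ E <;> by_cases h2 : i ∈ E <;>
      simp [h1, h2]
  rw [Finset.prod_congr rfl fun j _ => e3 j, Finset.prod_mul_distrib, Finset.prod_pow_eq_pow_sum,
    Finset.prod_pow_eq_pow_sum]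
  congr 2
  · have : ∀ j : ℤ, (if α j = true ∨ j ∈ E then cnt (win (ind E) (j + 1) m) else 0) =
        ∑ i ∈ E, if (α j = true ∨ j ∈ E) ∧ j < i ∧ i < j + 1 + m then 1 else 0 := by
      intro j
      by_cases hj : α j = true ∨ j ∈ E
      · rw [if_pos hj, cnt_win, Finset.sum_boole, Nat.cast_id]
        congr 1
        ext i
        simp only [ind, Finset.mem_filter, Finset.mem_Ico, decide_eq_true_eq, hj, true_and]
        constructor
        · rintro ⟨⟨h1, h2⟩, h3⟩; exact ⟨h3, by omega, h2⟩
        · rintro ⟨h3, h1, h2⟩; exact ⟨⟨by omega, h2⟩, h3⟩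
      · simp [hj]
    rw [Finset.sum_congr rfl fun j _ => this j, Finset.sum_comm, spinb]
    refine Finset.sum_congr rfl fun i hi => ?_
    rw [Finset.sum_boole, Nat.cast_id]
    congr 1
    ext j
    have := hE i hi
    simp only [Finset.mem_filter, Finset.mem_Ico, Finset.mem_Ioo]
    constructor
    · rintro ⟨_, h1, h2, h3⟩
      exact ⟨⟨by push_cast; omega, h2⟩, h1⟩
    · rintro ⟨⟨h1, h2⟩, h3⟩
      push_cast at *
      exact ⟨by omega, h3, h2, by omega⟩
  · rw [Finset.sum_boole, Nat.cast_id]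
    refine Finset.card_bij (fun j _ => j + ((m + 1 : ℕ) : ℤ)) ?_ ?_ ?_
    · intro j hj; exact (Finset.mem_filter.1 hj).2
    · intro a _ b _ hab; simpa using hab
    · intro j hj
      have := hE j hj
      refine ⟨j - ((m + 1 : ℕ) : ℤ), ?_, by ring⟩
      rw [Finset.mem_filter, Finset.mem_Ico]
      refine ⟨⟨by omega, by omega⟩, by simpa using hj⟩

/-- The one-row transfer matrix vanishes unless the two configurations form a strip. -/
lemma exists_HSb (q x : A) {n : ℕ} (hn : 1 ≤ n) {α γ : ℤ → Bool} {p : ℤ} {M : ℕ}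
    (hα : ∀ j < p, α j = true) (hα' : ∀ j, p + M ≤ j → α j = false)
    (hγ : ∀ j < p, γ j = true) (hγ' : ∀ j, p + M ≤ j → γ j = false)
    (h : line q x α γ p M (List.replicate n false) ≠ 0) : ∃ E, HSb n α γ E := by
  obtain ⟨m, rfl⟩ : ∃ m, n = m + 1 := ⟨n - 1, by omega⟩
  obtain ⟨e, he, hrec⟩ := exists_win α γ m M p (List.replicate (m + 1) false) (by simp)
  rw [← he, line_win q x α γ e m M p hrec] at h
  have hend : cnt (win e (p + M) (m + 1)) = 0 := by
    by_contra hc; simp [hc] at h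
  have hst : cnt (win e p (m + 1)) = 0 := by rw [he]; simp [cnt]
  rw [win_zero] at hend hst
  have hne : ∀ j, p ≤ j → j < p + M → lw q x (α j) (e j) (γ j) (cnt (win e (j + 1) m)) ≠ 0 := by
    intro j h1 h2 h0
    apply h
    rw [Finset.prod_eq_zero (Finset.mem_Ico.2 ⟨h1, h2⟩) h0, zero_mul]
  refine ⟨(Finset.Ico p (p + M)).filter fun j => e j = true, fun j => ?_⟩
  have key : ∀ j : ℤ, p ≤ j → (j ∈ (Finset.Ico p (p + M)).filter (fun j => e j = true) ↔
      e j = true ∧ j < p + M + (m + 1 : ℕ)) := by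
    intro j h1
    rw [Finset.mem_filter, Finset.mem_Ico]
    constructor
    · rintro ⟨⟨_, _⟩, h⟩; exact ⟨h, by omega⟩
    · rintro ⟨h2, h3⟩
      refine ⟨⟨h1, ?_⟩, h2⟩
      by_contra hc
      have := hend j (by omega) (by omega)
      simp [this] at h2
  have lowE : ∀ j : ℤ, j < p + (m + 1 : ℕ) →
      j ∉ (Finset.Ico p (p + M)).filter (fun j => e j = true) := by
    intro j hj hm
    rw [Finset.mem_filter, Finset.mem_Ico] at hm
    have := hst j hm.1.1 hj
    simp [this] at hm
  by_cases h1 : j < p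
  · have a := lowE j (by omega)
    have b := lowE (j + (m + 1 : ℕ)) (by omega)
    simp only [a, b, hα j h1, hγ j h1]; simp
  · by_cases h2 : j < p + M
    · rw [key j (by omega), key (j + (m + 1 : ℕ)) (by omega), hrec j (by omega) h2]
      have a := hne j (by omega) h2
      have hlt : j < p + M + (m + 1 : ℕ) := by omega
      have hlt' : j + (m + 1 : ℕ) < p + M + (m + 1 : ℕ) := by omega
      simp only [hlt, hlt', and_true, nx]
      revert a
      simp only [lw]
      cases α j <;> cases γ j <;> cases e j <;> simp
    · have a : j ∉ (Finset.Ico p (p + M)).filter (fun j => e j = true) := by simp; omega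
      have b : j + (m + 1 : ℕ) ∉ (Finset.Ico p (p + M)).filter (fun j => e j = true) := by
        simp; omega
      simp only [a, b, hα' j (by omega), hγ' j (by omega)]; simp
end Strips

/-! ### Young diagrams by diagonals -/

section Diagonals

lemma dg_exists (lam : YoungDiagram) (k : ℤ) :
    ∃ i : ℕ, 0 ≤ i + k ∧ (i, (i + k).toNat) ∉ lam := by
  obtain ⟨i, hi⟩ := Infinite.exists_notMem_finset
    (lam.cells.image Prod.fst ∪ Finset.range k.natAbs)
  rw [Finset.mem_union, not_or] at hi
  refine ⟨i, ?_, fun h => hi.1 (Finset.mem_image.2 ⟨_, (YoungDiagram.mem_cells _).2 h, rfl⟩)⟩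
  have := hi.2
  rw [Finset.mem_range] at this
  omega

/-- The row index of the first cell of content `k` outside `lam`. For `k ≥ 0` this is the number of
cells of content `k` in `lam`; for negative `k` it exceeds that number by `-k`. -/
noncomputable def dg (lam : YoungDiagram) (k : ℤ) : ℤ := (Nat.find (dg_exists lam k) : ℕ)

lemma dg_nonneg (lam : YoungDiagram) (k : ℤ) : 0 ≤ dg lam k := by simp [dg]

lemma dg_add_nonneg (lam : YoungDiagram) (k : ℤ) : 0 ≤ dg lam k + k :=
  (Nat.find_spec (dg_exists lam k)).1

lemma mem_iff_dg (lam : YoungDiagram) (i j : ℕ) : (i, j) ∈ lam ↔ (i : ℤ) < dg lam (j - i) := by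
  constructor
  · intro h
    by_contra hc
    have h1 := (Nat.find_spec (dg_exists lam (j - i)))
    have h2 : Nat.find (dg_exists lam (j - i)) ≤ i := by
      simp only [dg] at hc; omega
    exact h1.2 (lam.up_left_mem h2 (by omega) h)
  · intro h
    have h2 : i < Nat.find (dg_exists lam (j - i)) := by
      simp only [dg] at h; omega
    have := Nat.find_min _ h2
    by_contra hc
    refine this ⟨by omega, ?_⟩
    convert hc using 2
    simp

lemma dg_le_iff (lam : YoungDiagram) (k : ℤ) (i : ℕ) (hi : 0 ≤ i + k) :
    dg lam k ≤ i ↔ (i, (i + k).toNat) ∉ lam := by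
  rw [mem_iff_dg, not_lt]
  have : (((i + k).toNat : ℕ) : ℤ) - i = k := by omega
  rw [this]

lemma dg_anti (lam : YoungDiagram) (k : ℤ) : dg lam (k + 1) ≤ dg lam k := by
  have h0 := dg_nonneg lam k
  have h1 := dg_add_nonneg lam k
  obtain ⟨d, hd⟩ := Int.eq_ofNat_of_zero_le h0
  have h2 : dg lam k ≤ d := hd.le
  rw [dg_le_iff _ _ _ (by omega)] at h2
  rw [hd]
  refine (dg_le_iff lam (k + 1) d (by omega)).2 fun h => h2 ?_
  exact lam.up_left_mem le_rfl (by omega) h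

lemma dg_step (lam : YoungDiagram) (k : ℤ) : dg lam k ≤ dg lam (k + 1) + 1 := by
  have h0 := dg_nonneg lam (k + 1)
  have h1 := dg_add_nonneg lam (k + 1)
  obtain ⟨d, hd⟩ := Int.eq_ofNat_of_zero_le h0
  have h2 : dg lam (k + 1) ≤ d := hd.le
  rw [dg_le_iff _ _ _ (by omega)] at h2
  rw [hd]
  refine (dg_le_iff lam k (d + 1) (by push_cast; omega)).2 fun h => h2 ?_
  exact lam.up_left_mem (by omega) (by push_cast; omega) h

lemma dg_right (lam : YoungDiagram) (k : ℤ) (hk : lam.card ≤ k) : dg lam k = 0 := by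
  refine le_antisymm ?_ (dg_nonneg _ _)
  obtain ⟨m, rfl⟩ := Int.eq_ofNat_of_zero_le (show 0 ≤ k by omega)
  refine (dg_le_iff lam m 0 (by omega)).2 fun h => ?_
  have h2 : (Finset.range (m + 1)).image (fun j => ((0 : ℕ), j)) ⊆ lam.cells := by
    intro c hc
    obtain ⟨j, hj, rfl⟩ := Finset.mem_image.1 hc
    rw [Finset.mem_range] at hj
    exact (YoungDiagram.mem_cells _).2 (lam.up_left_mem le_rfl (by omega) h)
  have := Finset.card_le_card h2
  rw [Finset.card_image_of_injective _ (fun a b h => by simpa using h), Finset.card_range] at this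
  have e : lam.card = lam.cells.card := rfl
  omega

lemma dg_left (lam : YoungDiagram) (k : ℤ) (hk : k ≤ -lam.card) : dg lam k = -k := by
  refine le_antisymm ?_ (by have := dg_add_nonneg lam k; omega)
  obtain ⟨m, hm⟩ := Int.eq_ofNat_of_zero_le (show 0 ≤ -k by omega)
  rw [hm]
  refine (dg_le_iff lam k m (by omega)).2 fun h => ?_
  have h2 : (Finset.range (m + 1)).image (fun j => (j, (0 : ℕ))) ⊆ lam.cells := by
    intro c hc
    obtain ⟨j, hj, rfl⟩ := Finset.mem_image.1 hc
    rw [Finset.mem_range] at hj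
    exact (YoungDiagram.mem_cells _).2 (lam.up_left_mem (by omega) (by omega) h)
  have := Finset.card_le_card h2
  rw [Finset.card_image_of_injective _ (fun a b h => by simpa using h), Finset.card_range] at this
  have e : lam.card = lam.cells.card := rfl
  omega

lemma le_iff_dg {lam mu : YoungDiagram} : lam ≤ mu ↔ ∀ k, dg lam k ≤ dg mu k := by
  constructor
  · intro h k
    have h0 := dg_nonneg mu k
    have h1 := dg_add_nonneg mu k
    obtain ⟨d, hd⟩ := Int.eq_ofNat_of_zero_le h0
    have h2 : dg mu k ≤ d := hd.le
    rw [dg_le_iff _ _ _ (by omega)] at h2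
    rw [hd]
    exact (dg_le_iff lam k d (by omega)).2 fun h' => h2 (h h')
  · rintro h ⟨i, j⟩ hc
    exact (mem_iff_dg mu i j).2 (lt_of_lt_of_le ((mem_iff_dg lam i j).1 hc) (h _))

lemma dg_injective {lam mu : YoungDiagram} (h : ∀ k, dg lam k = dg mu k) : lam = mu :=
  le_antisymm (le_iff_dg.2 fun k => (h k).le) (le_iff_dg.2 fun k => (h k).ge)

lemma lip_of_step {f : ℤ → ℤ} (h1 : ∀ k, f (k + 1) ≤ f k) (h2 : ∀ k, f k ≤ f (k + 1) + 1)
    {a b : ℤ} (hab : a ≤ b) : f b ≤ f a ∧ f a ≤ f b + (b - a) := by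
  obtain ⟨m, rfl⟩ : ∃ m : ℕ, b = a + m := ⟨(b - a).toNat, by omega⟩
  clear hab
  induction m with
  | zero => simp
  | succ m ih =>
    have := h1 (a + m)
    have := h2 (a + m)
    push_cast
    rw [← add_assoc]
    omega

lemma dg_lip (lam : YoungDiagram) {a b : ℤ} (hab : a ≤ b) :
    dg lam b ≤ dg lam a ∧ dg lam a ≤ dg lam b + (b - a) :=
  lip_of_step (dg_anti lam) (dg_step lam) hab

/-- Every function with steps `0` or `-1` and the right behaviour at infinity is `dg lam` for some
`lam`. -/
lemma exists_dg (f : ℤ → ℤ) (h1 : ∀ k, f (k + 1) ≤ f k) (h2 : ∀ k, f k ≤ f (k + 1) + 1)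
    (K : ℕ) (hr : ∀ k, (K : ℤ) ≤ k → f k = 0) (hl : ∀ k : ℤ, k ≤ -K → f k = -k) :
    ∃ lam : YoungDiagram, ∀ k, dg lam k = f k := by
  have lip : ∀ {a b : ℤ}, a ≤ b → f b ≤ f a ∧ f a ≤ f b + (b - a) := fun h => lip_of_step h1 h2 h
  have p0 : ∀ k, 0 ≤ f k := by
    intro k
    have := (lip (le_max_left k K)).1
    rw [hr _ (le_max_right k K)] at this
    exact this
  have p1 : ∀ k, 0 ≤ f k + k := by
    intro k
    have := (lip (min_le_left k (-K))).2
    rw [hl _ (min_le_right k (-K))] at this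
    omega
  let lam : YoungDiagram :=
    { cells := (Finset.range (K + 1) ×ˢ Finset.range (2 * K + 1)).filter
        fun c => (c.1 : ℤ) < f (c.2 - c.1)
      isLowerSet := by
        rintro ⟨i, j⟩ ⟨i', j'⟩ hle hm
        simp only [Finset.coe_filter, Finset.mem_product, Finset.mem_range, Set.mem_ofPred_eq,
          Prod.mk_le_mk] at hm hle ⊢
        refine ⟨by omega, ?_⟩
        rcases le_total ((j' : ℤ) - i') (j - i) with h | h
        · have := (lip h).1; omega
        · have := (lip h).2; omega }
  have hmem : ∀ i j : ℕ, (i, j) ∈ lam ↔ (i : ℤ) < f (j - i) := by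
    intro i j
    rw [← YoungDiagram.mem_cells]
    simp only [lam, Finset.mem_filter, Finset.mem_product, Finset.mem_range, and_iff_right_iff_imp]
    intro h
    have a1 : (j : ℤ) - i < K := by
      by_contra hc
      rw [hr _ (by omega)] at h; omega
    have a2 : -(K : ℤ) < (j : ℤ) - i := by
      by_contra hc
      rw [hl _ (by omega)] at h; omega
    have := (lip a2.le).1
    rw [hl _ le_rfl] at this
    omega
  refine ⟨lam, fun k => ?_⟩
  have key : ∀ i : ℕ, 0 ≤ i + k → ((i : ℤ) < dg lam k ↔ (i : ℤ) < f k) := by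
    intro i hi
    have e : (((i + k).toNat : ℕ) : ℤ) - i = k := by omega
    have := mem_iff_dg lam i (i + k).toNat
    rw [hmem, e] at this
    exact this.symm
  have q0 := dg_nonneg lam k
  have q1 := dg_add_nonneg lam k
  have r0 := p0 k
  have r1 := p1 k
  have s0 := key (dg lam k).toNat (by omega)
  have s1 := key (f k).toNat (by omega)
  omega

/-- The edge sequence of `lam`: there is a bead at `k` if the boundary of `lam` has a vertical step
between the diagonals `k` and `k + 1`. Beads fill the far left, and the far right is empty. -/
noncomputable def bit (lam : YoungDiagram) (k : ℤ) : Bool := decide (dg lam k = dg lam (k + 1) + 1)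

lemma bit_true {lam : YoungDiagram} {k : ℤ} : bit lam k = true ↔ dg lam k = dg lam (k + 1) + 1 := by
  simp [bit]

lemma bit_false {lam : YoungDiagram} {k : ℤ} : bit lam k = false ↔ dg lam k = dg lam (k + 1) := by
  have := dg_anti lam k
  have := dg_step lam k
  simp only [bit, decide_eq_false_iff_not]
  omega

lemma bit_right (lam : YoungDiagram) (k : ℤ) (hk : lam.card ≤ k) : bit lam k = false := by
  rw [bit_false, dg_right _ _ hk, dg_right _ _ (by omega)]

lemma bit_left (lam : YoungDiagram) (k : ℤ) (hk : k < -lam.card) : bit lam k = true := by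
  rw [bit_true, dg_left _ _ hk.le, dg_left _ _ (by omega)]; ring

lemma bit_injective {lam mu : YoungDiagram} (h : ∀ k, bit lam k = bit mu k) : lam = mu := by
  apply dg_injective
  have key : ∀ (m : ℕ) (k : ℤ), (lam.card : ℤ) + mu.card - m ≤ k → dg lam k = dg mu k := by
    intro m
    induction m with
    | zero => intro k hk; rw [dg_right _ _ (by push_cast at hk; omega),
        dg_right _ _ (by push_cast at hk; omega)]
    | succ m ih =>
      intro k hk
      have h1 := ih (k + 1) (by push_cast at hk; omega)
      have h2 := h k
      cases h3 : bit mu k <;> rw [h3] at h2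
      · rw [bit_false] at h2 h3; omega
      · rw [bit_true] at h2 h3; omega
  exact fun k => key ((lam.card : ℤ) + mu.card - k).toNat k (by omega)
end Diagonals

/-! ### Ribbons -/

section Ribbons

/-- `ν` is obtained from `κ` by adding one box on each diagonal `h - n < k ≤ h`: this is the
numerical form of adding an `n`-ribbon whose topright-most cell has content `h`. -/
def AddR (n : ℕ) (κ ν : YoungDiagram) (h : ℤ) : Prop :=
  ∀ k, dg ν k = dg κ k + if h - n < k ∧ k ≤ h then 1 else 0

lemma mem_sdiff_dg {κ ν : YoungDiagram} (i j : ℕ) :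
    (i, j) ∈ ν.cells \ κ.cells ↔ dg κ (j - i) ≤ i ∧ (i : ℤ) < dg ν (j - i) := by
  rw [Finset.mem_sdiff, YoungDiagram.mem_cells, YoungDiagram.mem_cells, mem_iff_dg, mem_iff_dg,
    not_lt, and_comm]

lemma AddR.mem {n : ℕ} {κ ν : YoungDiagram} {h : ℤ} (H : AddR n κ ν h) (i j : ℕ) :
    (i, j) ∈ ν.cells \ κ.cells ↔
      (i : ℤ) = dg κ (j - i) ∧ h - n < (j : ℤ) - i ∧ (j : ℤ) - i ≤ h := by
  rw [mem_sdiff_dg, H]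
  split_ifs <;> omega

lemma AddR.le {n : ℕ} {κ ν : YoungDiagram} {h : ℤ} (H : AddR n κ ν h) : κ ≤ ν := by
  rw [le_iff_dg]; intro k; rw [H k]; split_ifs <;> omega

/-- The first cell on diagonal `k` outside `κ`. -/
noncomputable def rc (κ : YoungDiagram) (k : ℤ) : Cell := ((dg κ k).toNat, (dg κ k + k).toNat)

lemma rc_fst (κ : YoungDiagram) (k : ℤ) : ((rc κ k).1 : ℤ) = dg κ k :=
  Int.toNat_of_nonneg (dg_nonneg κ k)

lemma rc_snd (κ : YoungDiagram) (k : ℤ) : ((rc κ k).2 : ℤ) = dg κ k + k :=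
  Int.toNat_of_nonneg (dg_add_nonneg κ k)

lemma rc_injective (κ : YoungDiagram) : Function.Injective (rc κ) := by
  intro a b h
  have h1 := congrArg (fun c : Cell => (c.1 : ℤ)) h
  have h2 := congrArg (fun c : Cell => (c.2 : ℤ)) h
  simp only [rc_fst, rc_snd] at h1 h2
  omega

lemma AddR.cells {n : ℕ} {κ ν : YoungDiagram} {h : ℤ} (H : AddR n κ ν h) :
    ν.cells \ κ.cells = (Finset.Ioc (h - n) h).image (rc κ) := by
  ext ⟨i, j⟩
  rw [H.mem, Finset.mem_image]
  constructor
  · rintro ⟨h1, h2, h3⟩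
    refine ⟨j - i, Finset.mem_Ioc.2 ⟨h2, h3⟩, Prod.ext ?_ ?_⟩
    · have := rc_fst κ (j - i); simp only; omega
    · have := rc_snd κ (j - i); simp only; omega
  · rintro ⟨k, hk, e⟩
    rw [Finset.mem_Ioc] at hk
    have a := rc_fst κ k
    have b := rc_snd κ k
    rw [e] at a b
    simp only at a b
    have : (j : ℤ) - i = k := by omega
    rw [this]
    exact ⟨a, hk⟩

lemma AddR.card {n : ℕ} {κ ν : YoungDiagram} {h : ℤ} (H : AddR n κ ν h) :
    (ν.cells \ κ.cells).card = n := by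
  rw [H.cells, Finset.card_image_of_injective _ (rc_injective κ), Int.card_Ioc]
  omega

lemma adj_symm {a b : Cell} (h : Adj a b) : Adj b a := by
  unfold Adj at *; omega

lemma rc_adj (κ : YoungDiagram) (k : ℤ) : Adj (rc κ k) (rc κ (k + 1)) := by
  have := rc_fst κ k
  have := rc_snd κ k
  have := rc_fst κ (k + 1)
  have := rc_snd κ (k + 1)
  have := dg_anti κ k
  have := dg_step κ k
  unfold Adj
  omega

lemma AddR.isRibbon {n : ℕ} {κ ν : YoungDiagram} {h : ℤ} (H : AddR n κ ν h) :
    IsRibbon n (ν.cells \ κ.cells) := by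
  refine ⟨H.card, ?_, ?_, ⟨ν, κ, H.le, rfl⟩⟩
  · have key : ∀ (m : ℕ) (a : ℤ), a ∈ Finset.Ioc (h - n) h → a + m ∈ Finset.Ioc (h - n) h →
        Reach (ν.cells \ κ.cells) (rc κ a) (rc κ (a + m)) ∧
        Reach (ν.cells \ κ.cells) (rc κ (a + m)) (rc κ a) := by
      intro m a ha
      induction m with
      | zero => intro _; rw [Nat.cast_zero, add_zero]; exact ⟨Relation.ReflTransGen.refl, Relation.ReflTransGen.refl⟩
      | succ m ih =>
        intro hm
        have hm' : a + m ∈ Finset.Ioc (h - n) h := by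
          simp only [Finset.mem_Ioc] at *; push_cast at *; omega
        obtain ⟨i1, i2⟩ := ih hm'
        push_cast at hm ⊢
        rw [← add_assoc] at hm ⊢
        refine ⟨i1.tail ⟨?_, rc_adj κ _⟩, Relation.ReflTransGen.head ⟨?_, adj_symm (rc_adj κ _)⟩ i2⟩
        · rw [H.cells]; exact Finset.mem_image_of_mem _ hm
        · rw [H.cells]; exact Finset.mem_image_of_mem _ hm'
    intro a ha b hb
    have ha' := ha
    have hb' := hb
    rw [H.cells, Finset.mem_image] at ha' hb'
    obtain ⟨k, hk, rfl⟩ := ha'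
    obtain ⟨l, hl, rfl⟩ := hb'
    rcases le_total k l with hkl | hkl
    · obtain ⟨m, rfl⟩ : ∃ m : ℕ, l = k + m := ⟨(l - k).toNat, by omega⟩
      exact (key m k hk hl).1
    · obtain ⟨m, rfl⟩ : ∃ m : ℕ, k = l + m := ⟨(k - l).toNat, by omega⟩
      exact (key m l hl hk).2
  · rintro ⟨i, j, h1, -, -, h2⟩
    rw [H.mem] at h1 h2
    have e : ((j + 1 : ℕ) : ℤ) - (i + 1 : ℕ) = j - i := by push_cast; ring
    rw [e] at h2
    push_cast at h2
    omega

/-- A path of cells cannot jump over a diagonal. -/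
lemma reach_content {S : Finset Cell} {b : ℤ} (hb : ∀ c ∈ S, (c.2 : ℤ) - c.1 ≠ b) {a c : Cell}
    (h : Reach S a c) (ha : (a.2 : ℤ) - a.1 < b) : (c.2 : ℤ) - c.1 < b := by
  induction h with
  | refl => exact ha
  | tail _ h ih =>
    have := hb _ h.1
    have h2 := h.2
    unfold Adj at h2
    omega

/-- Every `n`-ribbon occupies `n` consecutive diagonals, with one cell on each. -/
lemma exists_addR {n : ℕ} (hn : 1 ≤ n) {κ ν : YoungDiagram} (hle : κ ≤ ν)
    (hR : IsRibbon n (ν.cells \ κ.cells)) : ∃ h, AddR n κ ν h := by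
  obtain ⟨hcard, hconn, hsq, -⟩ := hR
  have hle' := le_iff_dg.1 hle
  have h1 : ∀ k, dg ν k ≤ dg κ k + 1 := by
    intro k
    by_contra hc
    apply hsq
    have f := rc_fst κ k
    have s := rc_snd κ k
    refine ⟨(rc κ k).1, (rc κ k).2, ?_, ?_, ?_, ?_⟩
    · rw [mem_sdiff_dg, show ((rc κ k).2 : ℤ) - (rc κ k).1 = k by omega]; omega
    · rw [mem_sdiff_dg, show ((rc κ k).2 : ℤ) - ((rc κ k).1 + 1 : ℕ) = k - 1 by push_cast; omega]
      have a := dg_step κ (k - 1)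
      have b := dg_anti ν (k - 1)
      rw [sub_add_cancel] at a b
      push_cast; omega
    · rw [mem_sdiff_dg, show (((rc κ k).2 + 1 : ℕ) : ℤ) - (rc κ k).1 = k + 1 by push_cast; omega]
      have a := dg_anti κ k
      have b := dg_step ν k
      omega
    · rw [mem_sdiff_dg,
        show (((rc κ k).2 + 1 : ℕ) : ℤ) - ((rc κ k).1 + 1 : ℕ) = k by push_cast; omega]
      push_cast; omega
  set D : Finset ℤ := (ν.cells \ κ.cells).image (fun c : Cell => (c.2 : ℤ) - c.1) with hD
  have hmem : ∀ k, k ∈ D ↔ dg κ k < dg ν k := by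
    intro k
    rw [hD, Finset.mem_image]
    constructor
    · rintro ⟨⟨i, j⟩, hc, rfl⟩
      rw [mem_sdiff_dg] at hc
      exact lt_of_le_of_lt hc.1 hc.2
    · intro hk
      have f := rc_fst κ k
      have s := rc_snd κ k
      refine ⟨((rc κ k).1, (rc κ k).2), ?_, by simp only; omega⟩
      rw [mem_sdiff_dg, show ((rc κ k).2 : ℤ) - (rc κ k).1 = k by omega]; omega
  have hDc : D.card = n := by
    rw [hD, Finset.card_image_of_injOn, hcard]
    rintro ⟨i, j⟩ hc ⟨i', j'⟩ hc' e
    rw [Finset.mem_coe, mem_sdiff_dg] at hc hc'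
    simp only at e
    rw [e] at hc
    have := h1 ((j' : ℤ) - i')
    have e1 : i = i' := by omega
    subst e1
    have e2 : j = j' := by omega
    rw [e2]
  have hDn : D.Nonempty := by rw [← Finset.card_pos]; omega
  set a := D.min' hDn
  set h := D.max' hDn
  have ha : a ∈ D := D.min'_mem hDn
  have hh : h ∈ D := D.max'_mem hDn
  have hint : D = Finset.Icc a h := by
    ext b
    rw [Finset.mem_Icc]
    refine ⟨fun hb => ⟨D.min'_le _ hb, D.le_max' _ hb⟩, fun ⟨hb1, hb2⟩ => ?_⟩
    by_contra hb
    have na : a ≠ b := fun e => hb (e ▸ ha)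
    rw [hD, Finset.mem_image] at ha hh
    obtain ⟨c, hc, ec⟩ := ha
    obtain ⟨c', hc', ec'⟩ := hh
    have := reach_content (b := b) (fun d hd e => hb (hD ▸ Finset.mem_image.2 ⟨d, hd, e⟩))
      (hconn c hc c' hc') (by omega)
    omega
  have hca : h + 1 - a = n := by
    have := hDc
    rw [hint, Int.card_Icc] at this
    omega
  refine ⟨h, fun k => ?_⟩
  have m := hmem k
  rw [hint, Finset.mem_Icc] at m
  have := h1 k
  have := hle' k
  split_ifs <;> omega

lemma ribbonStep_iff {n : ℕ} (hn : 1 ≤ n) {lam mu : YoungDiagram} :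
    RibbonStep n lam mu ↔ ∃ h, AddR n mu lam h :=
  ⟨fun h => exists_addR hn h.1 h.2, fun ⟨_, h⟩ => ⟨h.le, h.isRibbon⟩⟩

lemma image_step {f : ℤ → ℤ} (h1 : ∀ k, f (k + 1) ≤ f k) (h2 : ∀ k, f k ≤ f (k + 1) + 1)
    (a : ℤ) (m : ℕ) : (Finset.Icc a (a + m)).image f = Finset.Icc (f (a + m)) (f a) := by
  induction m with
  | zero => simp
  | succ m ih =>
    have e : Finset.Icc a (a + (m + 1 : ℕ)) = insert (a + (m + 1 : ℕ)) (Finset.Icc a (a + m)) := by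
      ext x; simp only [Finset.mem_Icc, Finset.mem_insert]; push_cast; omega
    rw [e, Finset.image_insert, ih]
    have := h1 (a + m)
    have := h2 (a + m)
    have := (lip_of_step h1 h2 (show a ≤ a + m by omega)).1
    ext x
    simp only [Finset.mem_Icc, Finset.mem_insert]
    push_cast
    rw [← add_assoc]
    omega

lemma card_bits (κ : YoungDiagram) (a : ℤ) (m : ℕ) :
    (((Finset.Ico a (a + m)).filter fun j => bit κ j = true).card : ℤ) = dg κ a - dg κ (a + m) := by
  induction m with
  | zero => simp
  | succ m ih =>
    have e : Finset.Ico a (a + (m + 1 : ℕ)) = insert (a + m) (Finset.Ico a (a + m)) := by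
      ext x; simp only [Finset.mem_Ico, Finset.mem_insert]; push_cast; omega
    rw [e, Finset.filter_insert]
    push_cast
    rw [← add_assoc]
    split_ifs with hb
    · rw [Finset.card_insert_of_notMem (by simp)]
      rw [bit_true] at hb
      push_cast; omega
    · rw [Bool.not_eq_true, bit_false] at hb
      omega

/-- The spin of a ribbon is the number of beads strictly between the two ends of the jump. -/
lemma AddR.spin {n : ℕ} (hn : 1 ≤ n) {κ ν : YoungDiagram} {h : ℤ} (H : AddR n κ ν h) :
    ribbonSpin (ν.cells \ κ.cells)
      = ((Finset.Ioo (h - n) h).filter fun j => bit κ j = true).card := by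
  have e1 : Finset.Ioo (h - n) h = Finset.Ico (h - n + 1) (h - n + 1 + (n - 1 : ℕ)) := by
    ext x; simp only [Finset.mem_Ico, Finset.mem_Ioo]; omega
  have e2 : Finset.Ioc (h - n) h = Finset.Icc (h - n + 1) (h - n + 1 + (n - 1 : ℕ)) := by
    ext x; simp only [Finset.mem_Icc, Finset.mem_Ioc]; omega
  have c := card_bits κ (h - n + 1) (n - 1)
  have i := image_step (dg_anti κ) (dg_step κ) (h - n + 1) (n - 1)
  rw [← e1] at c
  rw [← e2] at i
  have := congrArg Finset.card i
  rw [Int.card_Icc] at this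
  have key : ((ν.cells \ κ.cells).image Prod.fst).card
      = ((Finset.Ioc (h - n) h).image (dg κ)).card := by
    rw [H.cells, Finset.image_image, ← Finset.card_image_of_injective (f := fun m : ℕ => (m : ℤ))
      _ Nat.cast_injective, Finset.image_image]
    exact congrArg Finset.card (Finset.image_congr fun k _ => rc_fst κ k)
  unfold ribbonSpin
  rw [key, this]
  omega

lemma topRight_unique {R : Finset Cell} {c d : Cell} (hc : TopRightCell R c)
    (hd : TopRightCell R d) : c = d := by
  have h1 := hc.2 d hd.1
  have h2 := hd.2 c hc.1
  exact Prod.ext (by omega) (by omega)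

lemma AddR.topRight {n : ℕ} (hn : 1 ≤ n) {κ ν : YoungDiagram} {h : ℤ} (H : AddR n κ ν h) :
    TopRightCell (ν.cells \ κ.cells) (rc κ h) := by
  rw [H.cells]
  refine ⟨Finset.mem_image_of_mem _ (Finset.mem_Ioc.2 (by omega)), fun d hd => ?_⟩
  obtain ⟨k, hk, rfl⟩ := Finset.mem_image.1 hd
  rw [Finset.mem_Ioc] at hk
  have := dg_lip κ hk.2
  have := rc_fst κ k
  have := rc_snd κ k
  have := rc_fst κ h
  have := rc_snd κ h
  omega

end Ribbons

/-! ### Tilings of horizontal strips -/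

section Tilings

/-- If a bead at `h` can jump to the empty place `h - n`, a ribbon can be removed whose topright-most
cell has content `h`. -/
lemma exists_remove {n : ℕ} (hn : 1 ≤ n) {μ : YoungDiagram} {h : ℤ}
    (h1 : bit μ h = true) (h2 : bit μ (h - n) = false) : ∃ μ', AddR n μ' μ h := by
  rw [bit_true] at h1
  rw [bit_false] at h2
  obtain ⟨μ', H⟩ := exists_dg (fun k => dg μ k - if h - n < k ∧ k ≤ h then 1 else 0) (by
      intro k
      have := dg_anti μ k
      have := dg_step μ k
      rcases eq_or_ne k h with rfl | hk
      · split_ifs <;> omega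
      · split_ifs <;> omega) (by
      intro k
      have := dg_anti μ k
      have := dg_step μ k
      rcases eq_or_ne k (h - n) with rfl | hk
      · split_ifs <;> omega
      · split_ifs <;> omega) (μ.card + h.natAbs + n) (by
      intro k hk
      have := dg_right μ k (by omega)
      split_ifs <;> omega) (by
      intro k hk
      have := dg_left μ k (by omega)
      split_ifs <;> omega)
  exact ⟨μ', fun k => by rw [H k]; ring⟩

/-- The numerical data of one ribbon in a horizontal strip tiling. -/
lemma tile_data {n : ℕ} (hn : 1 ≤ n) {lam μ : YoungDiagram}
    {T : Finset (Finset Cell)} (hT : IsHStripTiling n (μ.cells \ lam.cells) T)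
    {R : Finset Cell} (hR : R ∈ T) :
    ∃ (ρ : YoungDiagram) (h : ℤ),
      (∀ i j : ℕ, (i, j) ∈ R ↔ (i : ℤ) = dg ρ (j - i) ∧ h - n < (j : ℤ) - i ∧ (j : ℤ) - i ≤ h) ∧
      (∀ k, h - n < k → k ≤ h → dg lam k ≤ dg ρ k ∧ dg ρ k < dg μ k) ∧
      (1 ≤ dg ρ h → ¬ (dg lam (h + 1) ≤ dg ρ h - 1 ∧ dg ρ h - 1 < dg μ (h + 1))) := by
  obtain ⟨-, -, -, ν, κ, hle, rfl⟩ := id (hT.1.1 R hR)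
  obtain ⟨h, H⟩ := exists_addR hn hle (hT.1.1 _ hR)
  refine ⟨κ, h, H.mem, ?_, ?_⟩
  · intro k h1 h2
    have hm : rc κ k ∈ ν.cells \ κ.cells := by
      rw [H.cells]; exact Finset.mem_image_of_mem _ (Finset.mem_Ioc.2 ⟨h1, h2⟩)
    have hm2 : rc κ k ∈ μ.cells \ lam.cells := by
      rw [← hT.1.2.2]; exact Finset.mem_biUnion.2 ⟨_, hR, hm⟩
    have f := rc_fst κ k
    have s := rc_snd κ k
    have hm3 : ((rc κ k).1, (rc κ k).2) ∈ μ.cells \ lam.cells := hm2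
    rw [mem_sdiff_dg, show ((rc κ k).2 : ℤ) - (rc κ k).1 = k by omega] at hm3
    omega
  · intro h1 h2
    have f := rc_fst κ h
    have s := rc_snd κ h
    rcases hT.2 _ hR _ (H.topRight hn) with h3 | h3
    · omega
    · apply h3
      rw [mem_sdiff_dg, show ((rc κ h).2 : ℤ) - ((rc κ h).1 - 1 : ℕ) = h + 1 by omega]
      omega

lemma cells_eq {n : ℕ} {ρ : YoungDiagram} {h : ℤ} {R : Finset Cell}
    (hR : ∀ i j : ℕ, (i, j) ∈ R ↔ (i : ℤ) = dg ρ (j - i) ∧ h - n < (j : ℤ) - i ∧ (j : ℤ) - i ≤ h)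
    (k : ℤ) : rc ρ k ∈ R ↔ h - n < k ∧ k ≤ h := by
  have f := rc_fst ρ k
  have s := rc_snd ρ k
  have := hR (rc ρ k).1 (rc ρ k).2
  rw [show ((rc ρ k).2 : ℤ) - (rc ρ k).1 = k by omega] at this
  rw [this]
  omega

/-- The ribbon whose topright-most cell has the largest content can be peeled off a horizontal strip. -/
lemma peel {n : ℕ} (hn : 1 ≤ n) {lam μ : YoungDiagram} (hle : lam ≤ μ)
    {T : Finset (Finset Cell)} (hT : IsHStripTiling n (μ.cells \ lam.cells) T)
    (hne : T.Nonempty) :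
    ∃ (h : ℤ) (μ' : YoungDiagram), AddR n μ' μ h ∧ lam ≤ μ' ∧ μ.cells \ μ'.cells ∈ T ∧
      IsHStripTiling n (μ'.cells \ lam.cells) (T.erase (μ.cells \ μ'.cells)) ∧
      (∀ k, h < k → dg μ k = dg lam k) ∧ dg μ h = dg lam h + 1 := by
  have hle' := le_iff_dg.1 hle
  have hdata := fun R (hR : R ∈ T) => tile_data hn hT hR
  choose! ρ hd hmem hin hN using hdata
  have cover : ∀ k i : ℤ, dg lam k ≤ i → i < dg μ k →
      ∃ R ∈ T, dg (ρ R) k = i ∧ hd R - n < k ∧ k ≤ hd R := by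
    intro k i h1 h2
    have a := dg_nonneg lam k
    have b := dg_add_nonneg lam k
    have e : (((i + k).toNat : ℕ) : ℤ) - (i.toNat : ℕ) = k := by omega
    have : (i.toNat, (i + k).toNat) ∈ T.biUnion id := by
      rw [hT.1.2.2, mem_sdiff_dg, e]; omega
    obtain ⟨R, hR, hc⟩ := Finset.mem_biUnion.1 this
    rw [id, hmem R hR, e] at hc
    exact ⟨R, hR, by omega, hc.2⟩
  have disj : ∀ R ∈ T, ∀ R' ∈ T, ∀ k, hd R - n < k → k ≤ hd R → hd R' - n < k → k ≤ hd R' →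
      dg (ρ R) k = dg (ρ R') k → R = R' := by
    intro R hR R' hR' k h1 h2 h3 h4 e
    by_contra hc
    have d := hT.1.2.1 hR hR' hc
    have e' : rc (ρ R) k = rc (ρ R') k := by unfold rc; rw [e]
    refine Finset.disjoint_left.1 d ((cells_eq (hmem R hR) k).2 ⟨h1, h2⟩) ?_
    rw [e', cells_eq (hmem R' hR')]
    exact ⟨h3, h4⟩
  obtain ⟨R, hR, hmax⟩ := Finset.exists_max_image T hd hne
  set h := hd R with hh
  have c1 : ∀ k, h < k → dg μ k = dg lam k := by
    intro k hk
    by_contra hc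
    have := hle' k
    obtain ⟨R', hR', -, -, h3⟩ := cover k (dg lam k) le_rfl (by omega)
    have := hmax R' hR'
    omega
  have cR := hin R hR h (by omega) le_rfl
  have c1' := c1 (h + 1) (by omega)
  have m1 := dg_step μ h
  have m2 := dg_anti lam h
  have c2 : ∀ k, h - n < k → k ≤ h → dg (ρ R) k = dg μ k - 1 := by
    intro k hk1 hk2
    have i1 := hin R hR k hk1 hk2
    by_contra hc
    obtain ⟨R', hR', e, h3, h4⟩ := cover k (dg (ρ R) k + 1) (by omega) (by omega)
    have hmx := hmax R' hR'
    have nR : R ≠ R' := by rintro rfl; omega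
    have key : ∀ m : ℕ, k + m ≤ hd R' → dg (ρ R) (k + m) < dg (ρ R') (k + m) := by
      intro m
      induction m with
      | zero => intro _; rw [Nat.cast_zero, add_zero]; omega
      | succ m ih =>
        intro hm
        push_cast at hm ⊢
        rw [← add_assoc] at hm ⊢
        have a := ih (by omega)
        have b := dg_step (ρ R') (k + m)
        have c := dg_anti (ρ R) (k + m)
        have d : dg (ρ R) (k + m + 1) ≠ dg (ρ R') (k + m + 1) := fun e' =>
          nR (disj R hR R' hR' _ (by omega) (by omega) (by omega) (by omega) e')
        omega
    have k1 := key (hd R' - k).toNat (by omega)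
    rw [show k + ((hd R' - k).toNat : ℕ) = hd R' by omega] at k1
    have k2 := hN R' hR'
    have k3 := hin R hR (hd R') (by omega) (by omega)
    have k4 := hin R' hR' (hd R') (by omega) le_rfl
    have k5 := dg_anti lam (hd R')
    have k6 := dg_step μ (hd R')
    have k7 := dg_nonneg (ρ R) (hd R')
    omega
  have b1 : bit μ h = true := by rw [bit_true]; omega
  have b2 : bit μ (h - n) = false := by
    rw [bit_false]
    by_contra hc
    have a1 := dg_anti μ (h - n)
    have a2 := dg_step μ (h - n)
    have a3 := dg_step lam (h - n)
    have a4 := hin R hR (h - n + 1) (by omega) (by omega)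
    have a5 := c2 (h - n + 1) (by omega) (by omega)
    obtain ⟨R', hR', e, h3, h4⟩ := cover (h - n) (dg μ (h - n + 1)) (by omega) (by omega)
    rcases eq_or_lt_of_le h4 with h5 | h5
    · have k2 := hN R' hR'
      rw [← h5] at k2
      have := dg_nonneg (ρ R) (h - n + 1)
      omega
    · have nR : R ≠ R' := by rintro rfl; omega
      have d : dg (ρ R) (h - n + 1) ≠ dg (ρ R') (h - n + 1) := fun e' =>
          nR (disj R hR R' hR' _ (by omega) (by omega) (by omega) (by omega) e')
      have b := dg_step (ρ R') (h - n)
      have c := hin R' hR' (h - n + 1) (by omega) (by omega)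
      omega
  obtain ⟨μ', H⟩ := exists_remove hn b1 b2
  have hcell : μ.cells \ μ'.cells = R := by
    ext ⟨i, j⟩
    rw [H.mem, hmem R hR]
    refine and_congr_left fun hw => ?_
    rw [c2 _ hw.1 hw.2, H, if_pos hw]
    omega
  have hle2 : lam ≤ μ' := by
    rw [le_iff_dg]
    intro k
    have := H k
    split_ifs at this with hw
    · have := hin R hR k hw.1 hw.2
      omega
    · have := hle' k
      omega
  refine ⟨h, μ', H, hle2, hcell ▸ hR, ?_, c1, by omega⟩
  rw [hcell]
  have hsub : μ'.cells \ lam.cells ⊆ μ.cells \ lam.cells :=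
    Finset.sdiff_subset_sdiff H.le subset_rfl
  refine ⟨⟨fun A hA => hT.1.1 A (Finset.mem_of_mem_erase hA),
    hT.1.2.1.mono (by exact_mod_cast Finset.erase_subset _ _), ?_⟩, ?_⟩
  · have hRS : R ⊆ μ.cells \ lam.cells := by
      rw [← hT.1.2.2]; exact Finset.subset_biUnion_of_mem id hR
    ext c
    rw [Finset.mem_biUnion]
    constructor
    · rintro ⟨A, hA, hc⟩
      have hA' := Finset.mem_erase.1 hA
      have h1 : c ∈ μ.cells \ lam.cells := by
        rw [← hT.1.2.2]; exact Finset.mem_biUnion.2 ⟨A, hA'.2, hc⟩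
      have h2 : c ∉ R := Finset.disjoint_left.1 (hT.1.2.1 hA'.2 hR hA'.1) hc
      rw [← hcell] at h2
      simp only [Finset.mem_sdiff] at *
      tauto
    · intro hc
      have h1 := hsub hc
      rw [← hT.1.2.2, Finset.mem_biUnion] at h1
      obtain ⟨A, hA, hcA⟩ := h1
      refine ⟨A, Finset.mem_erase.2 ⟨?_, hA⟩, hcA⟩
      rintro rfl
      rw [id, ← hcell] at hcA
      simp only [Finset.mem_sdiff] at *
      tauto
  · intro A hA c hc
    rcases hT.2 A (Finset.mem_of_mem_erase hA) c hc with h1 | h1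
    · exact Or.inl h1
    · exact Or.inr fun h2 => h1 (hsub h2)

lemma tile_nonempty {n : ℕ} (hn : 1 ≤ n) {S : Finset Cell} {T : Finset (Finset Cell)}
    (hT : IsHStripTiling n S T) (hne : T.Nonempty) : S.Nonempty := by
  obtain ⟨R, hR⟩ := hne
  have h1 := (hT.1.1 R hR).1
  have h2 : R ⊆ S := by
    rw [← hT.1.2.2]; exact Finset.subset_biUnion_of_mem id hR
  exact Finset.Nonempty.mono h2 (Finset.card_pos.1 (by omega))

lemma AddR.unique {n : ℕ} {κ κ' ν : YoungDiagram} {h : ℤ} (H : AddR n κ ν h)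
    (H' : AddR n κ' ν h) : κ = κ' :=
  dg_injective fun k => by have := H k; have := H' k; omega

/-- The tiling of a horizontal ribbon strip is unique. -/
lemma tiling_unique {n : ℕ} (hn : 1 ≤ n) {lam μ : YoungDiagram} (hle : lam ≤ μ)
    {T T' : Finset (Finset Cell)} (hT : IsHStripTiling n (μ.cells \ lam.cells) T)
    (hT' : IsHStripTiling n (μ.cells \ lam.cells) T') : T = T' := by
  obtain ⟨m, hm⟩ : ∃ m, T.card = m := ⟨_, rfl⟩
  induction m generalizing μ T T' with
  | zero =>
    rw [Finset.card_eq_zero] at hm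
    subst hm
    have h0 : μ.cells \ lam.cells = ∅ := by rw [← hT.1.2.2]; rfl
    by_contra hc
    have := tile_nonempty hn hT' (Finset.nonempty_iff_ne_empty.2 (Ne.symm hc))
    rw [h0] at this
    exact Finset.not_nonempty_empty this
  | succ m ih =>
    have hne : T.Nonempty := Finset.card_pos.1 (by omega)
    have hne' : T'.Nonempty := by
      by_contra hc
      rw [Finset.not_nonempty_iff_eq_empty] at hc
      subst hc
      have h0 : μ.cells \ lam.cells = ∅ := by rw [← hT'.1.2.2]; rfl
      have := tile_nonempty hn hT hne
      rw [h0] at this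
      exact Finset.not_nonempty_empty this
    obtain ⟨h, μ₁, H, l, mT, t, g, e⟩ := peel hn hle hT hne
    obtain ⟨h', μ₂, H', l', mT', t', g', e'⟩ := peel hn hle hT' hne'
    have : h = h' := by
      rcases lt_trichotomy h h' with hlt | heq | hlt
      · have := g h' hlt; omega
      · exact heq
      · have := g' h hlt; omega
    subst this
    obtain rfl := H.unique H'
    have := ih l t t' (by rw [Finset.card_erase_of_mem mT]; omega)
    rw [← Finset.insert_erase mT, ← Finset.insert_erase mT', this]

lemma card_tiling {n : ℕ} {lam μ : YoungDiagram} (hle : lam ≤ μ)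
    {T : Finset (Finset Cell)} (hT : IsHStripTiling n (μ.cells \ lam.cells) T) :
    μ.card = lam.card + n * T.card := by
  have h1 : (μ.cells \ lam.cells).card = n * T.card := by
    rw [← hT.1.2.2, Finset.card_biUnion (t := id) (fun A hA B hB hAB => hT.1.2.1 hA hB hAB),
      Finset.sum_congr rfl (fun R hR => show (id R).card = n from (hT.1.1 R hR).1)]
    simp [mul_comm]
  have h2 := Finset.card_sdiff_add_card_eq_card (show lam.cells ⊆ μ.cells from hle)
  change μ.cells.card = lam.cells.card + _
  omega

end Tilings

/-! ### Strips of diagrams and moves of beads -/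

section StripBits

/-- The number of `e ∈ E` such that a ribbon with topright-most content `e` meets diagonal `k`. -/
noncomputable def occ (n : ℕ) (E : Finset ℤ) (k : ℤ) : ℤ :=
  ((E.filter fun e => k ≤ e ∧ e < k + n).card : ℤ)

lemma occ_step (n : ℕ) (E : Finset ℤ) (k : ℤ) :
    occ n E k + (if k + n ∈ E then 1 else 0) = occ n E (k + 1) + (if k ∈ E then 1 else 0) := by
  unfold occ
  simp only [Finset.card_filter]
  push_cast
  rw [← Finset.sum_ite_eq' E (k + n) (fun _ => (1 : ℤ)),
    ← Finset.sum_ite_eq' E k (fun _ => (1 : ℤ)), ← Finset.sum_add_distrib,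
    ← Finset.sum_add_distrib]
  refine Finset.sum_congr rfl fun e _ => ?_
  split_ifs <;> omega

lemma occ_out (n : ℕ) (E : Finset ℤ) : ∃ K : ℕ, ∀ k : ℤ, (K ≤ k ∨ k ≤ -K) → occ n E k = 0 := by
  obtain ⟨B, hB⟩ : ∃ B : ℕ, ∀ e ∈ E, e.natAbs ≤ B :=
    ⟨E.sup Int.natAbs, fun e he => Finset.le_sup (f := Int.natAbs) he⟩
  refine ⟨B + 1 + n, fun k hk => ?_⟩
  unfold occ
  rw [Nat.cast_eq_zero, Finset.card_eq_zero, Finset.filter_eq_empty_iff]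
  intro e he
  have := hB e he
  omega

lemma occ_nonneg (n : ℕ) (E : Finset ℤ) (k : ℤ) : 0 ≤ occ n E k := by unfold occ; positivity

lemma occ_pos {n : ℕ} (hn : 1 ≤ n) {E : Finset ℤ} {k : ℤ} (hk : k ∈ E) : 0 < occ n E k := by
  unfold occ
  exact_mod_cast Finset.card_pos.2 ⟨k, by rw [Finset.mem_filter]; exact ⟨hk, by omega⟩⟩

lemma bit_eq (lam : YoungDiagram) (k : ℤ) :
    dg lam k = dg lam (k + 1) + if bit lam k = true then 1 else 0 := by
  split_ifs with h
  · exact bit_true.1 h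
  · rw [Bool.not_eq_true, bit_false] at h; omega

lemma HSb_count {n : ℕ} {α γ : ℤ → Bool} {E : Finset ℤ} (h : HSb n α γ E) (k : ℤ) :
    (if γ k = true then 1 else 0) + (if k + n ∈ E then 1 else 0)
      = (if α k = true then 1 else 0) + (if k ∈ E then (1 : ℤ) else 0) := by
  have := h k
  split_ifs <;> simp_all

/-- The diagonals of a strip are as long as the number of ribbons that meet them. -/
lemma dg_of_HSb {n : ℕ} {lam μ : YoungDiagram} {E : Finset ℤ}
    (h : HSb n (bit lam) (bit μ) E) (k : ℤ) : dg μ k = dg lam k + occ n E k := by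
  obtain ⟨K, hK⟩ := occ_out n E
  have key : ∀ (m : ℕ) (k : ℤ), (lam.card : ℤ) + μ.card + K - m ≤ k →
      dg μ k = dg lam k + occ n E k := by
    intro m
    induction m with
    | zero =>
      intro k hk
      rw [dg_right _ _ (by push_cast at hk; omega), dg_right _ _ (by push_cast at hk; omega),
        hK _ (by push_cast at hk; omega)]; rfl
    | succ m ih =>
      intro k hk
      have h1 := ih (k + 1) (by push_cast at hk; omega)
      have h2 := HSb_count h k
      have h3 := occ_step n E k
      have h4 := bit_eq lam k
      have h5 := bit_eq μ k
      linarith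
  exact key ((lam.card : ℤ) + μ.card + K - k).toNat k (by omega)

lemma le_of_HSb {n : ℕ} {lam μ : YoungDiagram} {E : Finset ℤ}
    (h : HSb n (bit lam) (bit μ) E) : lam ≤ μ := by
  rw [le_iff_dg]; intro k; rw [dg_of_HSb h k]; have := occ_nonneg n E k; omega

lemma exists_of_bits {γ : ℤ → Bool} {f : ℤ → ℤ} {lam : YoungDiagram} {K : ℕ}
    (hf : ∀ k, f k = f (k + 1) + if γ k = true then 1 else 0)
    (hK : ∀ k : ℤ, (K ≤ k ∨ k ≤ -K) → f k = dg lam k) :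
    ∃ μ : YoungDiagram, bit μ = γ := by
  obtain ⟨μ, hμ⟩ := exists_dg f (fun k => by have := hf k; split_ifs at this <;> omega)
    (fun k => by have := hf k; split_ifs at this <;> omega) (K + lam.card)
    (fun k hk => by rw [hK k (by omega), dg_right _ _ (by omega)])
    (fun k hk => by rw [hK k (by omega), dg_left _ _ (by omega)])
  refine ⟨μ, funext fun k => ?_⟩
  have := hf k
  cases hγ : γ k <;> rw [hγ] at this
  · rw [bit_false, hμ, hμ]; simpa using this
  · rw [bit_true, hμ, hμ]; simpa using this

lemma exists_up {n : ℕ} {lam : YoungDiagram} {γ : ℤ → Bool} {E : Finset ℤ}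
    (h : HSb n (bit lam) γ E) : ∃ μ : YoungDiagram, bit μ = γ := by
  obtain ⟨K, hK⟩ := occ_out n E
  refine exists_of_bits (f := fun k => dg lam k + occ n E k) (lam := lam) (K := K) (fun k => ?_)
    (fun k hk => by rw [hK k hk, add_zero])
  have h2 := HSb_count h k
  have h3 := occ_step n E k
  have h4 := bit_eq lam k
  linarith

lemma exists_down {n : ℕ} {lam : YoungDiagram} {δ : ℤ → Bool} {E : Finset ℤ}
    (h : HSb n δ (bit lam) E) : ∃ μ : YoungDiagram, bit μ = δ := by
  obtain ⟨K, hK⟩ := occ_out n E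
  refine exists_of_bits (f := fun k => dg lam k - occ n E k) (lam := lam) (K := K) (fun k => ?_)
    (fun k hk => by rw [hK k hk, sub_zero])
  have h2 := HSb_count h k
  have h3 := occ_step n E k
  have h4 := bit_eq lam k
  linarith

lemma HSb_empty {n : ℕ} {α γ : ℤ → Bool} : HSb n α γ ∅ ↔ α = γ := by
  constructor
  · intro h
    funext j
    have := h j
    rw [Bool.eq_iff_iff]
    simpa using this
  · rintro rfl j; simp

/-- Adding a ribbon moves one bead from `h - n` to the empty place `h`. -/
lemma AddR.bit_iff {n : ℕ} (hn : 1 ≤ n) {κ ν : YoungDiagram} {h : ℤ} (H : AddR n κ ν h) :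
    bit ν h = true ∧ bit κ h = false ∧ bit ν (h - n) = false ∧ bit κ (h - n) = true ∧
      ∀ j, j ≠ h → j ≠ h - n → bit ν j = bit κ j := by
  have key : ∀ j, (if bit ν j = true then (1 : ℤ) else 0) - (if bit κ j = true then 1 else 0)
      = (if h - n < j ∧ j ≤ h then 1 else 0) - (if h - n < j + 1 ∧ j + 1 ≤ h then 1 else 0) := by
    intro j
    have h1 := H j
    have h2 := H (j + 1)
    have h3 := bit_eq κ j
    have h4 := bit_eq ν j
    linarith
  have k1 := key h
  have k2 := key (h - n)
  rw [if_pos (c := h - n < h ∧ h ≤ h) (by omega), if_neg (c := _ ∧ h + 1 ≤ h) (by omega)] at k1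
  rw [if_neg (c := h - n < h - n ∧ _) (by omega), if_pos (c := h - n < h - n + 1 ∧ _)
    (by omega)] at k2
  refine ⟨?_, ?_, ?_, ?_, ?_⟩
  · by_contra hc; split_ifs at k1 <;> omega
  · by_contra hc; split_ifs at k1 <;> simp_all
  · by_contra hc; split_ifs at k2 <;> simp_all
  · by_contra hc; split_ifs at k2 <;> omega
  · intro j h1 h2
    have k3 := key j
    have : (h - n < j ∧ j ≤ h) ↔ (h - n < j + 1 ∧ j + 1 ≤ h) := by omega
    simp only [this, sub_self] at k3
    rw [Bool.eq_iff_iff]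
    split_ifs at k3 <;> simp_all

lemma HSb_insert {n : ℕ} (hn : 1 ≤ n) {α : ℤ → Bool} {κ ν : YoungDiagram} {h : ℤ}
    (H : AddR n κ ν h) {E : Finset ℤ} (hE : HSb n α (bit κ) E) (hlt : ∀ e ∈ E, e < h)
    (hα : α h = false) : HSb n α (bit ν) (insert h E) := by
  obtain ⟨b1, b2, b3, b4, b5⟩ := H.bit_iff hn
  intro j
  have hj := hE j
  rw [Finset.mem_insert, Finset.mem_insert]
  by_cases h1 : j = h
  · subst h1
    have : j + n ∉ E := fun hm => by have := hlt _ hm; omega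
    have : ¬ (j + (n : ℤ) = j) := by omega
    simp_all
  · by_cases h2 : j = h - n
    · subst h2
      have : h - n + n = h := by omega
      simp_all
    · have e := b5 j h1 h2
      have : j + n ≠ h := by omega
      simp only [e, h1, this, false_or]
      exact hj

lemma HSb_erase {n : ℕ} (hn : 1 ≤ n) {α : ℤ → Bool} {κ ν : YoungDiagram} {h : ℤ}
    (H : AddR n κ ν h) {E : Finset ℤ} (hE : HSb n α (bit ν) E) (hle : ∀ e ∈ E, e ≤ h)
    (hh : h ∈ E) : HSb n α (bit κ) (E.erase h) := by
  obtain ⟨b1, b2, b3, b4, b5⟩ := H.bit_iff hn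
  intro j
  have hj := hE j
  rw [Finset.mem_erase, Finset.mem_erase]
  by_cases h1 : j = h
  · subst h1
    have : j + n ∉ E := fun hm => by have := hle _ hm; omega
    simp_all
  · by_cases h2 : j = h - n
    · subst h2
      have : h - n + n = h := by omega
      simp_all
    · have e := b5 j h1 h2
      have : j + n ≠ h := by omega
      simp only [← e, ne_eq, h1, this, not_false_eq_true, true_and]
      exact hj

lemma HSb_max {n : ℕ} (hn : 1 ≤ n) {α γ : ℤ → Bool} {h : ℤ}
    {E : Finset ℤ} (hE : HSb n α γ E) (hle : ∀ e ∈ E, e ≤ h)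
    (hh : h ∈ E) : γ h = true ∧ γ (h - n) = false := by
  have h1 := hE h
  have h2 := hE (h - n)
  have h3 : h + n ∉ E := fun hm => by have := hle _ hm; omega
  rw [sub_add_cancel] at h2
  simp_all

/-- A tiled horizontal strip is given by moves of beads, one for each ribbon. -/
lemma HSb_of_tiling {n : ℕ} (hn : 1 ≤ n) {lam μ : YoungDiagram} (hle : lam ≤ μ)
    {T : Finset (Finset Cell)} (hT : IsHStripTiling n (μ.cells \ lam.cells) T) :
    ∃ E, HSb n (bit lam) (bit μ) E := by
  obtain ⟨m, hm⟩ : ∃ m, T.card = m := ⟨_, rfl⟩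
  induction m generalizing μ T with
  | zero =>
    rw [Finset.card_eq_zero] at hm
    subst hm
    have h0 : μ.cells \ lam.cells = ∅ := by rw [← hT.1.2.2]; rfl
    have : lam = μ := le_antisymm hle (Finset.sdiff_eq_empty_iff_subset.1 h0)
    exact ⟨∅, HSb_empty.2 (by rw [this])⟩
  | succ m ih =>
    obtain ⟨h, μ', H, l, mT, t, g, e⟩ := peel hn hle hT (Finset.card_pos.1 (by omega))
    obtain ⟨E, hE⟩ := ih l t (by rw [Finset.card_erase_of_mem mT]; omega)
    have g' : ∀ k, h ≤ k → dg μ' k = dg lam k := by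
      intro k hk
      have := H k
      rcases eq_or_lt_of_le hk with rfl | hk
      · rw [if_pos (by omega)] at this; omega
      · have := g k hk
        rw [if_neg (by omega)] at *; omega
    refine ⟨insert h E, HSb_insert hn H hE ?_ ?_⟩
    · intro x hx
      by_contra hc
      have h1 := dg_of_HSb hE x
      have h2 := occ_pos hn hx
      have h3 := g' x (by omega)
      omega
    · have := (H.bit_iff hn).2.1
      rw [bit_false] at *
      rw [← g' h le_rfl, ← g' (h + 1) (by omega)]
      exact this

/-- Moves of beads give a tiled strip with matching number of ribbons and spin. -/
lemma tiling_of_HSb {n : ℕ} (hn : 1 ≤ n) {lam μ : YoungDiagram} {E : Finset ℤ}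
    (hE : HSb n (bit lam) (bit μ) E) :
    ∃ T, IsHStripTiling n (μ.cells \ lam.cells) T ∧ T.card = E.card ∧
      tilingSpin T = spinb n (bit lam) E := by
  obtain ⟨m, hm⟩ : ∃ m, E.card = m := ⟨_, rfl⟩
  induction m generalizing μ E with
  | zero =>
    rw [Finset.card_eq_zero] at hm
    subst hm
    obtain rfl := bit_injective (congrFun (HSb_empty.1 hE))
    refine ⟨∅, ⟨⟨by simp, by simp, by simp⟩, fun R hR => by simp at hR⟩, rfl, rfl⟩
  | succ m ih =>
    have hne : E.Nonempty := Finset.card_pos.1 (by omega)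
    obtain ⟨h, hh, hmx⟩ : ∃ h ∈ E, ∀ e ∈ E, e ≤ h := ⟨_, E.max'_mem hne, fun e he => E.le_max' e he⟩
    obtain ⟨m1, m2⟩ := HSb_max hn hE hmx hh
    obtain ⟨μ', H⟩ := exists_remove hn m1 m2
    have hE' := HSb_erase hn H hE hmx hh
    obtain ⟨T, hT, hc, hs⟩ := ih hE' (by rw [Finset.card_erase_of_mem hh]; omega)
    have l1 := le_of_HSb hE'
    have hR := H.isRibbon
    have hRT : μ.cells \ μ'.cells ∉ T := by
      intro hmem
      obtain ⟨c, hc⟩ := Finset.card_pos.1 (show 0 < (μ.cells \ μ'.cells).card by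
        rw [H.card]; omega)
      have h2 : c ∈ μ'.cells \ lam.cells := by
        rw [← hT.1.2.2]; exact Finset.mem_biUnion.2 ⟨_, hmem, hc⟩
      rw [Finset.mem_sdiff] at hc h2
      exact hc.2 h2.1
    have hdisj : ∀ A ∈ T, Disjoint (μ.cells \ μ'.cells) A := by
      intro A hA
      rw [Finset.disjoint_left]
      intro c hc hcA
      have h2 : c ∈ μ'.cells \ lam.cells := by
        rw [← hT.1.2.2]; exact Finset.mem_biUnion.2 ⟨_, hA, hcA⟩
      rw [Finset.mem_sdiff] at hc h2
      exact hc.2 h2.1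
    refine ⟨insert (μ.cells \ μ'.cells) T, ⟨⟨?_, ?_, ?_⟩, ?_⟩, ?_, ?_⟩
    · intro A hA
      rcases Finset.mem_insert.1 hA with rfl | hA
      · exact hR
      · exact hT.1.1 A hA
    · rw [Finset.coe_insert]
      refine hT.1.2.1.insert fun A hA _ => ⟨hdisj A hA, (hdisj A hA).symm⟩
    · rw [Finset.biUnion_insert, hT.1.2.2]
      ext c
      have a1 : c ∈ lam.cells → c ∈ μ'.cells := fun h => l1 h
      have a2 : c ∈ μ'.cells → c ∈ μ.cells := fun h => H.le h
      simp only [id, Finset.mem_union, Finset.mem_sdiff]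
      tauto
    · intro A hA c hc
      rcases Finset.mem_insert.1 hA with rfl | hA
      · obtain rfl := topRight_unique hc (H.topRight hn)
        have f := rc_fst μ' h
        have s := rc_snd μ' h
        by_cases h0 : (rc μ' h).1 = 0
        · exact Or.inl h0
        · right
          rw [mem_sdiff_dg, show ((rc μ' h).2 : ℤ) - ((rc μ' h).1 - 1 : ℕ) = h + 1 by omega]
          have d := dg_of_HSb hE (h + 1)
          have o : occ n E (h + 1) = 0 := by
            unfold occ
            rw [Nat.cast_eq_zero, Finset.card_eq_zero, Finset.filter_eq_empty_iff]
            intro e he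
            have := hmx e he
            omega
          omega
      · rcases hT.2 A hA c hc with h1 | h1
        · exact Or.inl h1
        · right
          intro h2
          apply h1
          rw [Finset.mem_sdiff] at h2 ⊢
          refine ⟨?_, h2.2⟩
          have h3 : c ∈ μ'.cells \ lam.cells := by
            rw [← hT.1.2.2]; exact Finset.mem_biUnion.2 ⟨_, hA, hc.1⟩
          rw [Finset.mem_sdiff, YoungDiagram.mem_cells] at h3
          rw [YoungDiagram.mem_cells]
          exact μ'.up_left_mem (Nat.sub_le _ _) le_rfl h3.1
    · rw [Finset.card_insert_of_notMem hRT, hc, Finset.card_erase_of_mem hh]; omega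
    · unfold tilingSpin at *
      rw [Finset.sum_insert hRT, hs, H.spin hn]
      unfold spinb
      rw [← Finset.add_sum_erase E _ hh]
      congr 1
      · congr 1
        refine Finset.filter_congr fun j hj => ?_
        rw [Finset.mem_Ioo] at hj
        have a := (H.bit_iff hn).2.2.2.2 j (by omega) (by omega)
        have b := hE j
        have c : j + n ∉ E := fun hm => by have := hmx _ hm; omega
        rw [← a]
        tauto
      · refine Finset.sum_congr rfl fun i hi => ?_
        rw [Finset.mem_erase] at hi
        congr 1
        refine Finset.filter_congr fun j hj => ?_
        rw [Finset.mem_Ioo] at hj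
        have := hmx i hi.2
        rw [Finset.mem_erase]
        have : j ≠ h := by omega
        tauto

/-- The number of ribbons and the spin of a given tiling, read off from the moves of beads; uniqueness of
the tiling is what makes this hold for every tiling. -/
lemma HSb_iff_tiling {n : ℕ} (hn : 1 ≤ n) {lam μ : YoungDiagram} (hle : lam ≤ μ)
    {T : Finset (Finset Cell)} (hT : IsHStripTiling n (μ.cells \ lam.cells) T) :
    ∃ E, HSb n (bit lam) (bit μ) E ∧ E.card = T.card ∧ spinb n (bit lam) E = tilingSpin T := by
  obtain ⟨E, hE⟩ := HSb_of_tiling hn hle hT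
  obtain ⟨T', hT', h1, h2⟩ := tiling_of_HSb hn hE
  obtain rfl := tiling_unique hn hle hT hT'
  exact ⟨E, hE, h1.symm, h2.symm⟩

lemma card_of_HSb {n : ℕ} (hn : 1 ≤ n) {lam μ : YoungDiagram} {E : Finset ℤ}
    (hE : HSb n (bit lam) (bit μ) E) : μ.card = lam.card + n * E.card := by
  obtain ⟨T, hT, h1, -⟩ := tiling_of_HSb hn hE
  rw [card_tiling (le_of_HSb hE) hT, h1]

end StripBits

/-! ### Cores -/

section Cores

/-- Two diagrams whose bead configurations differ by moves of length `n`: `e j` is the net number of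
beads that move from `j - n` to `j`. -/
def CoreRel (n : ℕ) (κ ν : YoungDiagram) : Prop :=
  ∃ e : ℤ → ℤ, (∃ K : ℕ, ∀ k : ℤ, (K ≤ k ∨ k ≤ -K) → e k = 0) ∧
    ∀ j, (if bit ν j = true then (1 : ℤ) else 0) - (if bit κ j = true then 1 else 0)
      = e j - e (j + n)

lemma CoreRel.symm {n : ℕ} {κ ν : YoungDiagram} (h : CoreRel n κ ν) : CoreRel n ν κ := by
  obtain ⟨e, ⟨K, hK⟩, he⟩ := h
  exact ⟨fun k => - e k, ⟨K, fun k hk => by simp [hK k hk]⟩,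
    fun j => by have := he j; linarith⟩

lemma CoreRel.trans {n : ℕ} {κ ν ρ : YoungDiagram} (h : CoreRel n κ ν) (h' : CoreRel n ν ρ) :
    CoreRel n κ ρ := by
  obtain ⟨e, ⟨K, hK⟩, he⟩ := h
  obtain ⟨e', ⟨K', hK'⟩, he'⟩ := h'
  exact ⟨fun k => e k + e' k, ⟨K + K', fun k hk => by
    simp [hK k (by omega), hK' k (by omega)]⟩,
    fun j => by have := he j; have := he' j; linarith⟩

lemma CoreRel.refl {n : ℕ} (κ : YoungDiagram) : CoreRel n κ κ :=
  ⟨fun _ => 0, ⟨0, fun _ _ => rfl⟩, fun j => by simp⟩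

lemma coreRel_of_HSb {n : ℕ} {lam μ : YoungDiagram} {E : Finset ℤ}
    (hE : HSb n (bit lam) (bit μ) E) : CoreRel n lam μ := by
  obtain ⟨B, hB⟩ : ∃ B : ℕ, ∀ e ∈ E, e.natAbs ≤ B :=
    ⟨E.sup Int.natAbs, fun e he => Finset.le_sup (f := Int.natAbs) he⟩
  refine ⟨fun k => if k ∈ E then 1 else 0, ⟨B + 1, fun k hk => if_neg fun hm => ?_⟩, fun j => ?_⟩
  · have := hB k hm; omega
  · have := HSb_count hE j
    linarith

lemma AddR.HSb {n : ℕ} (hn : 1 ≤ n) {κ ν : YoungDiagram} {h : ℤ} (H : AddR n κ ν h) :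
    HSb n (bit κ) (bit ν) {h} := by
  have := HSb_insert hn H (HSb_empty.2 rfl) (by simp) (H.bit_iff hn).2.1
  simpa using this

lemma coreRel_of_steps {n : ℕ} (hn : 1 ≤ n) {lam δ : YoungDiagram}
    (h : Relation.ReflTransGen (RibbonStep n) lam δ) : CoreRel n lam δ := by
  induction h with
  | refl => exact CoreRel.refl _
  | tail _ h ih =>
    obtain ⟨h, H⟩ := (ribbonStep_iff hn).1 h
    exact ih.trans (coreRel_of_HSb (H.HSb hn)).symm

/-- In a core every bead has a bead `n` places to its left. -/
lemma core_flush {n : ℕ} (hn : 1 ≤ n) {δ : YoungDiagram} (hδ : ∀ μ, ¬ RibbonStep n δ μ) (h : ℤ)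
    (hb : bit δ h = true) : bit δ (h - n) = true := by
  by_contra hc
  obtain ⟨μ', H⟩ := exists_remove hn hb (by simpa using hc)
  exact hδ μ' ((ribbonStep_iff hn).2 ⟨h, H⟩)

lemma core_bits {n : ℕ} {δ δ' : YoungDiagram}
    (h : ∀ h, bit δ h = true → bit δ (h - n) = true)
    (h' : ∀ h, bit δ' h = true → bit δ' (h - n) = true)
    (hr : CoreRel n δ' δ) (hn : 1 ≤ n) (j : ℤ) (h1 : bit δ j = true) : bit δ' j = true := by
  by_contra h2
  obtain ⟨e, ⟨K, hK⟩, he⟩ := hr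
  have r : ∀ m : ℕ, bit δ' (j + m * n) = false := by
    intro m
    induction m with
    | zero => simpa using h2
    | succ m ih =>
      by_contra hc
      have := h' _ (eq_true_of_ne_false hc)
      rw [show j + ((m + 1 : ℕ) : ℤ) * n - n = j + m * n by push_cast; ring, ih] at this
      simp at this
  have l : ∀ m : ℕ, bit δ (j - m * n) = true := by
    intro m
    induction m with
    | zero => simpa using h1
    | succ m ih =>
      have := h _ ih
      rwa [show j - (m : ℤ) * n - n = j - ((m + 1 : ℕ) : ℤ) * n by push_cast; ring] at this
  have anti : Antitone fun m : ℤ => e (j + m * n) := by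
    refine antitone_int_of_succ_le fun m => ?_
    have := he (j + m * n)
    rw [show j + (m + 1) * (n : ℤ) = j + m * n + n by ring]
    rcases le_total 0 m with hm | hm
    · obtain ⟨a, rfl⟩ := Int.eq_ofNat_of_zero_le hm
      rw [r a] at this
      simp only [Bool.false_eq_true, if_false] at this
      split_ifs at this <;> omega
    · obtain ⟨a, ha⟩ := Int.eq_ofNat_of_zero_le (show 0 ≤ -m by omega)
      obtain rfl : m = -a := by omega
      have la := l a
      rw [show j - (a : ℤ) * n = j + -a * n by ring] at la
      rw [la] at this
      simp only [if_true] at this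
      split_ifs at this <;> omega
  have h0 := he j
  rw [if_pos h1, if_neg h2] at h0
  have b : ((K : ℤ) + j.natAbs + 1) ≤ ((K : ℤ) + j.natAbs + 1) * n := by nlinarith
  have a1 := anti (show (1 : ℤ) ≤ K + j.natAbs + 1 by omega)
  have a2 := anti (show -((K : ℤ) + j.natAbs + 1) ≤ 0 by omega)
  simp only [neg_mul, one_mul, zero_mul, add_zero] at a1 a2
  rw [hK (j + (K + j.natAbs + 1) * n) (by left; omega)] at a1
  rw [hK (j + -((K + j.natAbs + 1) * n)) (by right; omega)] at a2
  omega

lemma core_unique {n : ℕ} (hn : 1 ≤ n) {δ δ' : YoungDiagram} (hδ : ∀ μ, ¬ RibbonStep n δ μ)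
    (hδ' : ∀ μ, ¬ RibbonStep n δ' μ) (hr : CoreRel n δ' δ) : δ = δ' := by
  refine bit_injective fun j => ?_
  rw [Bool.eq_iff_iff]
  exact ⟨core_bits (core_flush hn hδ) (core_flush hn hδ') hr hn j,
    core_bits (core_flush hn hδ') (core_flush hn hδ) hr.symm hn j⟩

lemma exists_core {n : ℕ} (hn : 1 ≤ n) (lam : YoungDiagram) : ∃ δ, IsNCoreOf n δ lam := by
  obtain ⟨m, hm⟩ : ∃ m, lam.card = m := ⟨_, rfl⟩
  induction m using Nat.strong_induction_on generalizing lam with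
  | _ m ih =>
    by_cases hc : ∃ μ, RibbonStep n lam μ
    · obtain ⟨μ, hμ⟩ := hc
      obtain ⟨h, H⟩ := (ribbonStep_iff hn).1 hμ
      have := card_of_HSb hn (H.HSb hn)
      rw [Finset.card_singleton] at this
      obtain ⟨δ, h1, h2⟩ := ih μ.card (by omega) μ rfl
      exact ⟨δ, Relation.ReflTransGen.head hμ h1, h2⟩
    · exact ⟨lam, Relation.ReflTransGen.refl, not_exists.1 hc⟩

lemma nCore_spec {n : ℕ} (hn : 1 ≤ n) (lam : YoungDiagram) : IsNCoreOf n (nCore n lam) lam := by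
  have h := exists_core hn lam
  unfold nCore
  rw [dif_pos h]
  exact h.choose_spec

/-- Adding a strip does not change the core. -/
lemma nCore_eq {n : ℕ} (hn : 1 ≤ n) {lam μ : YoungDiagram} {E : Finset ℤ}
    (hE : HSb n (bit lam) (bit μ) E) : nCore n μ = nCore n lam := by
  have h1 := nCore_spec hn lam
  have h2 := nCore_spec hn μ
  exact core_unique hn h2.2 h1.2
    (((coreRel_of_steps hn h1.1).symm.trans (coreRel_of_HSb hE)).trans (coreRel_of_steps hn h2.1))

/-- No nonempty strip can be removed from a core. -/
lemma core_bottom {n : ℕ} (hn : 1 ≤ n) {δ lam : YoungDiagram} (hδ : ∀ μ, ¬ RibbonStep n δ μ)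
    {E : Finset ℤ} (hE : HSb n (bit lam) (bit δ) E) : E = ∅ := by
  by_contra hc
  have hne := Finset.nonempty_iff_ne_empty.2 hc
  obtain ⟨h1, h2⟩ := HSb_max hn hE (fun e he => E.le_max' e he) (E.max'_mem hne)
  have := core_flush hn hδ _ h1
  simp [h2] at this

end Cores

/-! ### Commutation of strip operators -/

section Commutation
open scoped Classical
variable {A : Type*} [CommRing A]

/-- The weight `q^spin x^(number of ribbons)` of the strip `β/α`, and `0` if `β/α` is not a
horizontal `n`-ribbon strip. -/
noncomputable def Uw (n : ℕ) (q x : A) (α β : YoungDiagram) : A :=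
  if h : ∃ E, HSb n (bit α) (bit β) E then q ^ spinb n (bit α) h.choose * x ^ h.choose.card else 0

lemma Uw_of_HSb {n : ℕ} (hn : 1 ≤ n) (q x : A) {α β : YoungDiagram} {E : Finset ℤ}
    (hE : HSb n (bit α) (bit β) E) : Uw n q x α β = q ^ spinb n (bit α) E * x ^ E.card := by
  have h : ∃ E, HSb n (bit α) (bit β) E := ⟨E, hE⟩
  unfold Uw
  rw [dif_pos h, HSb_unique hn h.choose_spec hE]

lemma Uw_eq_zero {n : ℕ} (q x : A) {α β : YoungDiagram}
    (h : ¬ ∃ E, HSb n (bit α) (bit β) E) : Uw n q x α β = 0 := by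
  unfold Uw
  rw [dif_neg h]

lemma map_Uw {B : Type*} [CommRing B] (φ : A →+* B) (n : ℕ) (q x : A) (α β : YoungDiagram) :
    φ (Uw n q x α β) = Uw n (φ q) (φ x) α β := by
  unfold Uw
  split_ifs <;> simp

lemma Uw_le {n : ℕ} {q x : A} {α β : YoungDiagram} (h : Uw n q x α β ≠ 0) : α ≤ β := by
  by_contra hc
  exact h (Uw_eq_zero q x fun ⟨E, hE⟩ => hc (le_of_HSb hE))

lemma diag_finite (B : ℕ) : {lam : YoungDiagram | lam.card ≤ B}.Finite := by
  have hinj : Function.Injective YoungDiagram.cells := fun a b h => YoungDiagram.ext h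
  refine Set.Finite.subset (Set.Finite.preimage hinj.injOn
    (Finset.finite_toSet (Finset.range B ×ˢ Finset.range B).powerset)) ?_
  intro lam hlam
  simp only [Set.mem_ofPred_eq, Set.mem_preimage, Finset.mem_coe, Finset.mem_powerset] at *
  rintro ⟨i, j⟩ hc
  rw [YoungDiagram.mem_cells] at hc
  have h1 := (mem_iff_dg lam 0 j).1 (lam.up_left_mem (Nat.zero_le i) le_rfl hc)
  have h2 := (mem_iff_dg lam i 0).1 (lam.up_left_mem le_rfl (Nat.zero_le j) hc)
  rw [Finset.mem_product, Finset.mem_range, Finset.mem_range]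
  constructor
  · by_contra hh
    rw [dg_left _ _ (by push_cast; simp only at hh; omega)] at h2
    push_cast at h2; omega
  · by_contra hh
    rw [dg_right _ _ (by push_cast; simp only at hh; omega)] at h1
    simp at h1

/-- All Young diagrams with at most `B` cells. -/
noncomputable def diags (B : ℕ) : Finset YoungDiagram := (diag_finite B).toFinset

lemma mem_diags {B : ℕ} {lam : YoungDiagram} : lam ∈ diags B ↔ lam.card ≤ B := by
  simp [diags]

lemma word_append (α β : ℤ → Bool) (a b : ℕ) : ∀ p : ℤ,
    word α β p (a + b) = word α β p a ++ word α β (p + a) b := by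
  induction a with
  | zero => intro p; simp [word]
  | succ a ih =>
    intro p
    rw [Nat.succ_add, word, word, ih, List.cons_append]
    congr 3; push_cast; ring

lemma word_const {α β : ℤ → Bool} (u v : Bool) (a : ℕ) : ∀ p : ℤ,
    (∀ j, p ≤ j → j < p + a → α j = u ∧ β j = v) → word α β p a = List.replicate a (u, v) := by
  induction a with
  | zero => intros; rfl
  | succ a ih =>
    intro p h
    obtain ⟨h1, h2⟩ := h p le_rfl (by push_cast; omega)
    rw [word, ih (p + 1) (fun j h1 h2 => h j (by omega) (by push_cast; omega)), h1, h2]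
    rfl

variable {n : ℕ} {B : ℕ}

/-- The bits outside the window starting at `p` are completed by the vacuum. -/
def vext (p : ℤ) (g : Finset ℤ) (j : ℤ) : Bool := decide (j < p ∨ j ∈ g)

lemma line_eq_Uw (hn : 1 ≤ n) (q x : A) {p : ℤ} {M : ℕ} {α γ : YoungDiagram}
    (hp : p + B ≤ 0) (hM : (B : ℤ) ≤ p + M) (hα : α.card ≤ B) (hγ : γ.card ≤ B) :
    line q x (bit α) (bit γ) p M (List.replicate n false) = Uw n q x α γ := by
  by_cases h : ∃ E, HSb n (bit α) (bit γ) E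
  · obtain ⟨E, hE⟩ := h
    rw [Uw_of_HSb hn q x hE]
    exact line_of_HSb q x hn hE (fun j hj => bit_left γ j (by omega))
      (fun j hj => bit_right γ j (by omega))
  · rw [Uw_eq_zero q x h]
    by_contra hc
    exact h (exists_HSb q x hn (fun j hj => bit_left α j (by omega))
      (fun j hj => bit_right α j (by omega)) (fun j hj => bit_left γ j (by omega))
      (fun j hj => bit_right γ j (by omega)) hc)

lemma vext_left {p : ℤ} {g : Finset ℤ} (j : ℤ) (hj : j < p) : vext p g j = true := by
  simp [vext, hj]

lemma vext_right {p : ℤ} {M : ℕ} {g : Finset ℤ} (hg : g ⊆ Finset.Ico p (p + M)) (j : ℤ)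
    (hj : p + M ≤ j) : vext p g j = false := by
  simp only [vext, decide_eq_false_iff_not, not_or]
  refine ⟨by omega, fun h => ?_⟩
  have := Finset.mem_Ico.1 (hg h)
  omega

/-- The bits of a diagram in a window. -/
noncomputable def wbits (p : ℤ) (M : ℕ) (γ : YoungDiagram) : Finset ℤ :=
  (Finset.Ico p (p + M)).filter fun j => bit γ j = true

lemma vext_wbits {p : ℤ} {M : ℕ} {γ : YoungDiagram} (hp : p + B ≤ 0) (hM : (B : ℤ) ≤ p + M)
    (hγ : γ.card ≤ B) : vext p (wbits p M γ) = bit γ := by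
  funext j
  rw [Bool.eq_iff_iff]
  simp only [vext, wbits, decide_eq_true_eq, Finset.mem_filter, Finset.mem_Ico]
  constructor
  · rintro (h | h)
    · exact bit_left γ j (by omega)
    · exact h.2
  · intro h
    by_cases h1 : j < p
    · exact Or.inl h1
    · refine Or.inr ⟨⟨by omega, ?_⟩, h⟩
      by_contra hc
      rw [bit_right γ j (by omega)] at h
      simp at h

lemma wbits_vext {p : ℤ} {M : ℕ} {γ : YoungDiagram} {g : Finset ℤ}
    (hg : g ⊆ Finset.Ico p (p + M)) (h : bit γ = vext p g) : wbits p M γ = g := by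
  ext j
  simp only [wbits, h, vext, Finset.mem_filter, decide_eq_true_eq]
  constructor
  · rintro ⟨h1, h2 | h2⟩
    · rw [Finset.mem_Ico] at h1; omega
    · exact h2
  · intro h1; exact ⟨hg h1, Or.inr h1⟩

/-- Splitting a sum over bit configurations in a window into diagrams of size at most `B` and a
remainder. -/
lemma sum_window (p : ℤ) (M : ℕ) (hp : p + B ≤ 0) (hM : (B : ℤ) ≤ p + M)
    (F : (ℤ → Bool) → A) :
    ∑ g ∈ (Finset.Ico p (p + M)).powerset, F (vext p g) =
      ∑ γ ∈ diags B, F (bit γ) +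
      ∑ g ∈ (Finset.Ico p (p + M)).powerset with ¬ ∃ γ ∈ diags B, bit γ = vext p g, F (vext p g) := by
  rw [← Finset.sum_filter_add_sum_filter_not _ (fun g => ∃ γ ∈ diags B, bit γ = vext p g)]
  congr 1
  symm
  refine Finset.sum_bij (fun γ _ => wbits p M γ) ?_ ?_ ?_ ?_
  · intro γ hγ
    rw [Finset.mem_filter, Finset.mem_powerset]
    exact ⟨Finset.filter_subset _ _, γ, hγ, (vext_wbits hp hM (mem_diags.1 hγ)).symm⟩
  · intro γ hγ γ' hγ' e
    apply bit_injective
    intro k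
    rw [← vext_wbits hp hM (mem_diags.1 hγ), ← vext_wbits hp hM (mem_diags.1 hγ')]
    rw [e]
  · intro g hg
    rw [Finset.mem_filter, Finset.mem_powerset] at hg
    obtain ⟨h1, γ, hγ, h2⟩ := hg
    exact ⟨γ, hγ, wbits_vext h1 h2⟩
  · intro γ hγ
    rw [vext_wbits hp hM (mem_diags.1 hγ)]

/-- The commutation relation between adding strips with weight `x` and removing strips with weight `t`,
modulo `t ^ (K + 1)`: it is `transfer_comm` on a window so large that every diagram of the sums has
its nontrivial bits inside it. The diagrams `γ` with more than `B` cells contribute multiples of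
`t ^ (K + 1)` only. -/
theorem Uw_comm (hn : 1 ≤ n) (q qi : A) (hq : q * qi = 1) (x t : A) (K : ℕ)
    {α β : YoungDiagram} (hα : α.card ≤ B) (hβ : β.card + n * K ≤ B) :
    t ^ (K + 1) ∣ (∏ j ∈ Finset.range n, (1 - q ^ (2 * j) * (x * t))) *
        ∑ γ ∈ diags B, Uw n q x α γ * Uw n q t β γ
      - ∑ δ ∈ diags B, Uw n q x δ β * Uw n q t δ α := by
  obtain ⟨p, hp⟩ : ∃ p : ℤ, p = -B - n := ⟨_, rfl⟩
  obtain ⟨M, hM⟩ : ∃ M : ℕ, M = n + (2 * B + n * (K + 1)) := ⟨_, rfl⟩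
  have hβ' : β.card ≤ B := le_trans (Nat.le_add_right _ _) hβ
  have hp0 : p + B ≤ 0 := by omega
  have hM0 : (B : ℤ) ≤ p + M := by rw [hM, hp]; push_cast; nlinarith
  have hw : word (bit α) (bit β) p M = List.replicate n (true, true) ++
      (word (bit α) (bit β) (p + n) (2 * B) ++ zs (n * (K + 1))) := by
    rw [hM, word_append, word_append, word_const true true n p,
      word_const false false (n * (K + 1)) (p + n + (2 * B : ℕ))]
    · rfl
    · intro j h1 h2
      exact ⟨bit_right α j (by push_cast at h1; omega), bit_right β j (by push_cast at h1; omega)⟩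
    · intro j h1 h2
      exact ⟨bit_left α j (by omega), bit_left β j (by omega)⟩
  have key := transfer_comm q qi hq x t n (K + 1) hn (word (bit α) (bit β) (p + n) (2 * B))
  have z1 : (zs n).map Prod.fst = List.replicate n false := by simp [zs]
  have z2 : (zs n).map Prod.snd = List.replicate n false := by simp [zs]
  rw [← hw, Lops_word, Mops_word, z1, z2] at key
  have i1 : ∀ g ⊆ Finset.Ico p (p + M), ∀ j : ℤ, p ≤ j → j < p + M → ind g j = vext p g j := by
    intro g _ j h1 _
    have : ¬ j < p := by omega
    simp [ind, vext, this]
  have s1 : ∑ g ∈ (Finset.Ico p (p + M)).powerset,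
      line q x (ind g) (bit β) p M (List.replicate n false) *
        line q t (ind g) (bit α) p M (List.replicate n false)
      = ∑ δ ∈ diags B, Uw n q x δ β * Uw n q t δ α := by
    have e : ∀ g ∈ (Finset.Ico p (p + M)).powerset,
        line q x (ind g) (bit β) p M (List.replicate n false) *
        line q t (ind g) (bit α) p M (List.replicate n false)
        = (fun γ => line q x γ (bit β) p M (List.replicate n false) *
          line q t γ (bit α) p M (List.replicate n false)) (vext p g) := by
      intro g hg
      rw [Finset.mem_powerset] at hg
      simp only
      rw [line_congr q x M p _ (i1 g hg) (fun _ _ _ => rfl),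
        line_congr q t M p _ (i1 g hg) (fun _ _ _ => rfl)]
    rw [Finset.sum_congr rfl e, sum_window p M hp0 hM0 (fun γ => line q x γ (bit β) p M (List.replicate n false) *
          line q t γ (bit α) p M (List.replicate n false)), Finset.sum_eq_zero (s := Finset.filter _ _),
      add_zero]
    · refine Finset.sum_congr rfl fun δ hδ => ?_
      have := mem_diags.1 hδ
      rw [line_eq_Uw hn q x hp0 hM0 this hβ', line_eq_Uw hn q t hp0 hM0 this hα]
    · intro g hg
      rw [Finset.mem_filter, Finset.mem_powerset] at hg
      by_contra hc
      obtain ⟨E, hE⟩ := exists_HSb q x hn (fun j hj => vext_left j hj) (vext_right hg.1)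
        (fun j hj => bit_left β j (by omega)) (fun j hj => bit_right β j (by omega))
        (left_ne_zero_of_mul hc)
      obtain ⟨δ, hδ⟩ := exists_down hE
      refine hg.2 ⟨δ, mem_diags.2 ?_, hδ⟩
      rw [← hδ] at hE
      have := card_of_HSb hn hE
      omega
  have s2 : ∃ Z : A, ∑ g ∈ (Finset.Ico p (p + M)).powerset,
      line q x (bit α) (ind g) p M (List.replicate n false) *
        line q t (bit β) (ind g) p M (List.replicate n false)
      = ∑ γ ∈ diags B, Uw n q x α γ * Uw n q t β γ + t ^ (K + 1) * Z := by
    have e : ∀ g ∈ (Finset.Ico p (p + M)).powerset,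
        line q x (bit α) (ind g) p M (List.replicate n false) *
        line q t (bit β) (ind g) p M (List.replicate n false)
        = (fun γ => line q x (bit α) γ p M (List.replicate n false) *
          line q t (bit β) γ p M (List.replicate n false)) (vext p g) := by
      intro g hg
      rw [Finset.mem_powerset] at hg
      simp only
      rw [line_congr q x M p _ (fun _ _ _ => rfl) (i1 g hg),
        line_congr q t M p _ (fun _ _ _ => rfl) (i1 g hg)]
    rw [Finset.sum_congr rfl e, sum_window p M hp0 hM0 (fun γ => line q x (bit α) γ p M (List.replicate n false) *
          line q t (bit β) γ p M (List.replicate n false))]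
    have hd : t ^ (K + 1) ∣ ∑ g ∈ (Finset.Ico p (p + M)).powerset with
        ¬ ∃ γ ∈ diags B, bit γ = vext p g,
        (fun γ => line q x (bit α) γ p M (List.replicate n false) *
          line q t (bit β) γ p M (List.replicate n false)) (vext p g) := by
      refine Finset.dvd_sum fun g hg => ?_
      rw [Finset.mem_filter, Finset.mem_powerset] at hg
      by_cases h0 : line q t (bit β) (vext p g) p M (List.replicate n false) = 0
      · simp only [h0, mul_zero, dvd_zero]
      obtain ⟨E, hE⟩ := exists_HSb q t hn
        (fun j hj => bit_left β j (by omega)) (fun j hj => bit_right β j (by omega))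
        (fun j hj => vext_left j hj) (vext_right hg.1) h0
      simp only
      rw [line_of_HSb q t hn hE (fun j hj => vext_left j hj) (vext_right hg.1)]
      obtain ⟨γ, hγ⟩ := exists_up hE
      have hc : ¬ γ.card ≤ B := fun h => hg.2 ⟨γ, mem_diags.2 h, hγ⟩
      rw [← hγ] at hE
      have := card_of_HSb hn hE
      have hlt : K + 1 ≤ E.card := by
        by_contra hlt
        have : n * E.card ≤ n * K := Nat.mul_le_mul_left n (by omega)
        omega
      exact Dvd.dvd.mul_left (Dvd.dvd.mul_left (pow_dvd_pow t hlt) _) _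
    obtain ⟨Z, hZ⟩ := hd
    refine ⟨Z, ?_⟩
    rw [hZ]
    congr 1
    refine Finset.sum_congr rfl fun γ hγ => ?_
    have := mem_diags.1 hγ
    rw [line_eq_Uw hn q x hp0 hM0 hα this, line_eq_Uw hn q t hp0 hM0 hβ' this]
  obtain ⟨Z, hZ⟩ := s2
  rw [s1, hZ] at key
  obtain ⟨Y, hY⟩ := key
  refine ⟨-Y - (∏ j ∈ Finset.range n, (1 - q ^ (2 * j) * (x * t))) * Z, ?_⟩
  linear_combination -hY

end Commutation

/-! ### Generating functions of ribbon tableaux -/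

section Tableaux
open scoped Classical
variable {A : Type*} [CommRing A]

/-- The generating function of `n`-ribbon tableaux of shape `lam/δ` with `m` letters, computed
letter by letter: `y i` marks the letter `i` and `q` marks the spin. -/
noncomputable def Rf (n : ℕ) (q : A) (δ : YoungDiagram) :
    (m : ℕ) → (Fin m → A) → YoungDiagram → A
  | 0, _, lam => if lam = δ then 1 else 0
  | m + 1, y, lam => ∑ α ∈ diags lam.card,
      Uw n q (y (Fin.last m)) α lam * Rf n q δ m (fun i => y i.castSucc) α

lemma Uw_sum_bound {n B : ℕ} (q x : A) (F : YoungDiagram → A) {lam : YoungDiagram}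
    (hB : lam.card ≤ B) :
    ∑ α ∈ diags B, Uw n q x α lam * F α = ∑ α ∈ diags lam.card, Uw n q x α lam * F α := by
  symm
  refine Finset.sum_subset (fun α hα => ?_) (fun α _ hα => ?_)
  · rw [mem_diags] at *; omega
  · by_contra hc
    have := Uw_le (left_ne_zero_of_mul hc)
    exact hα (mem_diags.2 (Finset.card_le_card this))

lemma Rf_succ {n B m : ℕ} (q : A) (δ : YoungDiagram) (y : Fin (m + 1) → A) {lam : YoungDiagram}
    (hB : lam.card ≤ B) :
    Rf n q δ (m + 1) y lam = ∑ α ∈ diags B,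
      Uw n q (y (Fin.last m)) α lam * Rf n q δ m (fun i => y i.castSucc) α := by
  rw [Uw_sum_bound q _ _ hB]; rfl

lemma map_Rf {C : Type*} [CommRing C] (φ : A →+* C) (n : ℕ) (q : A) (δ : YoungDiagram) (m : ℕ) :
    ∀ (y : Fin m → A) (lam : YoungDiagram),
      φ (Rf n q δ m y lam) = Rf n (φ q) δ m (fun i => φ (y i)) lam := by
  induction m with
  | zero => intro y lam; simp only [Rf]; split_ifs <;> simp
  | succ m ih =>
    intro y lam
    simp only [Rf, map_sum, map_mul, map_Uw, ih]

lemma RibbonTableau.ext_chain {n m : ℕ} (hn : 1 ≤ n) {lam mu : YoungDiagram}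
    {T T' : RibbonTableau n m lam mu} (h : T.chain = T'.chain) : T = T' := by
  have ht : T.tiling = T'.tiling := by
    funext i
    have h1 := T.tiling_strip i
    rw [h] at h1
    exact tiling_unique hn (T'.chain_mono i) h1 (T'.tiling_strip i)
  cases T; cases T'
  simp only at h ht
  subst h; subst ht; rfl

lemma RibbonTableau.chain_le {n m : ℕ} {lam mu : YoungDiagram}
    (T : RibbonTableau n m lam mu) (i : Fin (m + 1)) : T.chain i ≤ lam := by
  have hm : Monotone T.chain := Fin.monotone_iff_le_succ.2 T.chain_mono
  have := hm (Fin.le_last i)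
  rwa [T.chain_last] at this

lemma RibbonTableau.finite {n m : ℕ} (hn : 1 ≤ n) {lam mu : YoungDiagram} :
    Finite (RibbonTableau n m lam mu) := by
  refine Finite.of_injective (β := Fin (m + 1) → {α // α ∈ diags lam.card})
    (fun T i => ⟨T.chain i, mem_diags.2 (Finset.card_le_card (T.chain_le i))⟩) ?_
  intro T T' h
  refine RibbonTableau.ext_chain hn (funext fun i => ?_)
  exact congrArg Subtype.val (congrFun h i)

/-- Adding the strip of the largest letter to a tableau. -/
def RibbonTableau.extend {n m : ℕ} {lam mu α : YoungDiagram} (T : RibbonTableau n m α mu)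
    (hle : α ≤ lam) {τ : Finset (Finset Cell)} (hτ : IsHStripTiling n (lam.cells \ α.cells) τ) :
    RibbonTableau n (m + 1) lam mu where
  chain := Fin.snoc (α := fun _ => YoungDiagram) T.chain lam
  chain_zero := by
    rw [← Fin.castSucc_zero, Fin.snoc_castSucc]; exact T.chain_zero
  chain_last := by rw [Fin.snoc_last]
  chain_mono := by
    intro i
    refine Fin.lastCases ?_ (fun j => ?_) i
    · rw [Fin.snoc_castSucc, Fin.succ_last, Fin.snoc_last, T.chain_last]; exact hle
    · rw [Fin.snoc_castSucc, Fin.succ_castSucc, Fin.snoc_castSucc]; exact T.chain_mono j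
  tiling := Fin.snoc (α := fun _ => Finset (Finset Cell)) T.tiling τ
  tiling_strip := by
    intro i
    refine Fin.lastCases ?_ (fun j => ?_) i
    · rw [Fin.snoc_castSucc, Fin.succ_last, Fin.snoc_last, T.chain_last, Fin.snoc_last]; exact hτ
    · rw [Fin.snoc_castSucc, Fin.succ_castSucc, Fin.snoc_castSucc, Fin.snoc_castSucc]
      exact T.tiling_strip j

/-- Removing the strip of the largest letter from a tableau. -/
def RibbonTableau.restrict {n m : ℕ} {lam mu : YoungDiagram} (T : RibbonTableau n (m + 1) lam mu) :
    RibbonTableau n m (T.chain (Fin.last m).castSucc) mu where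
  chain := fun i => T.chain i.castSucc
  chain_zero := by rw [Fin.castSucc_zero]; exact T.chain_zero
  chain_last := rfl
  chain_mono := fun i => by rw [← Fin.succ_castSucc]; exact T.chain_mono i.castSucc
  tiling := fun i => T.tiling i.castSucc
  tiling_strip := fun i => by rw [← Fin.succ_castSucc]; exact T.tiling_strip i.castSucc

/-- The weight `q^spin y^weight` of a ribbon tableau. -/
def tabTerm {n m : ℕ} {lam mu : YoungDiagram} (q : A) (y : Fin m → A)
    (T : RibbonTableau n m lam mu) : A :=
  q ^ T.spin * ∏ i, y i ^ (T.tiling i).card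

lemma tabTerm_extend {n m : ℕ} {lam mu α : YoungDiagram} (q : A) (y : Fin (m + 1) → A)
    (T : RibbonTableau n m α mu) (hle : α ≤ lam) {τ : Finset (Finset Cell)}
    (hτ : IsHStripTiling n (lam.cells \ α.cells) τ) :
    tabTerm q y (T.extend hle hτ) =
      q ^ tilingSpin τ * y (Fin.last m) ^ τ.card * tabTerm q (fun i => y i.castSucc) T := by
  unfold tabTerm RibbonTableau.spin
  rw [Fin.sum_univ_castSucc, Fin.prod_univ_castSucc]
  simp only [RibbonTableau.extend, Fin.snoc_castSucc, Fin.snoc_last]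
  ring

lemma Uw_of_tiling {n : ℕ} (hn : 1 ≤ n) (q x : A) {α lam : YoungDiagram} (hle : α ≤ lam)
    {τ : Finset (Finset Cell)} (hτ : IsHStripTiling n (lam.cells \ α.cells) τ) :
    Uw n q x α lam = q ^ tilingSpin τ * x ^ τ.card := by
  obtain ⟨E, hE, h1, h2⟩ := HSb_iff_tiling hn hle hτ
  rw [Uw_of_HSb hn q x hE, h1, h2]

/-- `Rf` is the generating function of ribbon tableaux: the tableaux are sorted by the shape formed by
all letters but the largest. -/
theorem tab_sum {n : ℕ} (hn : 1 ≤ n) (q : A) (mu : YoungDiagram) (m : ℕ) :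
    ∀ (y : Fin m → A) (lam : YoungDiagram),
      ∑ᶠ T : RibbonTableau n m lam mu, tabTerm q y T = Rf n q mu m y lam := by
  induction m with
  | zero =>
    intro y lam
    by_cases h : lam = mu
    · subst h
      let T0 : RibbonTableau n 0 lam lam :=
        ⟨fun _ => lam, rfl, rfl, fun i => i.elim0, fun i => i.elim0, fun i => i.elim0⟩
      have : Subsingleton (RibbonTableau n 0 lam lam) := ⟨fun T T' => by
        refine RibbonTableau.ext_chain hn (funext fun i => ?_)
        rw [Fin.fin_one_eq_zero i, T.chain_zero, T'.chain_zero]⟩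
      have : Unique (RibbonTableau n 0 lam lam) := ⟨⟨T0⟩, fun _ => Subsingleton.elim _ _⟩
      rw [finsum_unique]
      simp [Rf, tabTerm, RibbonTableau.spin]
    · have : IsEmpty (RibbonTableau n 0 lam mu) := ⟨fun T =>
        h (T.chain_last.symm.trans T.chain_zero)⟩
      rw [finsum_of_isEmpty]
      simp [Rf, h]
  | succ m ih =>
    intro y lam
    have := RibbonTableau.finite (n := n) (m := m + 1) hn (lam := lam) (mu := mu)
    have := Fintype.ofFinite (RibbonTableau n (m + 1) lam mu)
    rw [finsum_eq_sum_of_fintype, Rf]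
    rw [← Finset.sum_fiberwise_of_maps_to (s := Finset.univ) (t := diags lam.card)
      (g := fun T : RibbonTableau n (m + 1) lam mu => T.chain (Fin.last m).castSucc)
      (fun T _ => mem_diags.2 (Finset.card_le_card (T.chain_le _)))]
    refine Finset.sum_congr rfl fun α hα => ?_
    rw [← ih]
    by_cases hst : α ≤ lam ∧ ∃ τ, IsHStripTiling n (lam.cells \ α.cells) τ
    · obtain ⟨hle, τ, hτ⟩ := hst
      have := RibbonTableau.finite (n := n) (m := m) hn (lam := α) (mu := mu)
      have := Fintype.ofFinite (RibbonTableau n m α mu)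
      rw [finsum_eq_sum_of_fintype, Finset.mul_sum, Uw_of_tiling hn q _ hle hτ]
      symm
      refine Finset.sum_bij (fun T _ => T.extend hle hτ) ?_ ?_ ?_ ?_
      · intro T _
        rw [Finset.mem_filter]
        refine ⟨Finset.mem_univ _, ?_⟩
        simp only [RibbonTableau.extend, Fin.snoc_castSucc]
        exact T.chain_last
      · intro T _ T' _ e
        refine RibbonTableau.ext_chain hn (funext fun i => ?_)
        have := congrFun (congrArg RibbonTableau.chain e) i.castSucc
        simpa only [RibbonTableau.extend, Fin.snoc_castSucc] using this
      · intro T hT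
        rw [Finset.mem_filter] at hT
        obtain ⟨_, hT⟩ := hT
        subst hT
        refine ⟨T.restrict, Finset.mem_univ _, ?_⟩
        refine RibbonTableau.ext_chain hn (funext fun i => ?_)
        refine Fin.lastCases ?_ (fun j => ?_) i
        · simp only [RibbonTableau.extend, Fin.snoc_last]
          exact T.chain_last.symm
        · simp only [RibbonTableau.extend, Fin.snoc_castSucc, RibbonTableau.restrict]
      · intro T _
        rw [tabTerm_extend]
    · rw [Finset.sum_eq_zero, Uw_eq_zero, zero_mul]
      · rintro ⟨E, hE⟩
        obtain ⟨τ, hτ, _⟩ := tiling_of_HSb hn hE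
        exact hst ⟨le_of_HSb hE, τ, hτ⟩
      · intro T hT
        rw [Finset.mem_filter] at hT
        exfalso
        apply hst
        rw [← hT.2]
        have h1 := T.chain_mono (Fin.last m)
        have h2 := T.tiling_strip (Fin.last m)
        rw [Fin.succ_last, T.chain_last] at h1 h2
        exact ⟨h1, _, h2⟩

lemma ribbonFn_eq_Rf {n : ℕ} (hn : 1 ≤ n) (N : ℕ) (lam mu : YoungDiagram) :
    ribbonFn n N lam mu =
      Rf n (MvPolynomial.C Polynomial.X : MvPolynomial (Fin N) (Polynomial ℤ)) mu N
        MvPolynomial.X lam := by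
  rw [← tab_sum hn]
  unfold ribbonFn
  refine finsum_congr fun T => ?_
  simp [tableauTerm, tabTerm]

end Tableaux

/-! ### Complete homogeneous symmetric polynomials -/

section Homogeneous
open scoped Classical
variable {A : Type*} [CommRing A]

lemma hPoly_equiv {ι κ : Type*} [Fintype ι] [Fintype κ] [DecidableEq ι] [DecidableEq κ] (e : ι ≃ κ)
    (k : ℕ) (v : κ → A) : hPoly k (fun i => v (e i)) = hPoly k v := by
  unfold hPoly
  refine Fintype.sum_equiv (Sym.equivCongr e) _ _ fun s => ?_
  simp [Sym.equivCongr]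

lemma hPoly_zero {ι : Type*} [Fintype ι] [DecidableEq ι] (v : ι → A) : hPoly 0 v = 1 := by
  simp [hPoly, Sym.eq_nil_of_card_zero]

lemma hPoly_option {ι : Type*} [Fintype ι] [DecidableEq ι] {inst : DecidableEq (Option ι)}
    (k : ℕ) (v : Option ι → A) :
    hPoly (k + 1) v = v none * hPoly k v + hPoly (k + 1) (fun i => v (some i)) := by
  have hinst : inst = (fun a b => Option.instDecidableEq a b) := Subsingleton.elim _ _
  subst hinst
  unfold hPoly
  rw [Fintype.sum_equiv (symOptionSuccEquiv (α := ι) (n := k)) _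
    (fun s => (((SymOptionSuccEquiv.decode s : Sym (Option ι) k.succ) : Multiset (Option ι)).map v).prod)
    (fun s => by
      congr 3
      exact (symOptionSuccEquiv.symm_apply_apply s).symm), Fintype.sum_sum_type, Finset.mul_sum]
  congr 1
  · refine Finset.sum_congr rfl fun s _ => ?_
    rw [SymOptionSuccEquiv.decode_inl, Sym.coe_cons, Multiset.map_cons, Multiset.prod_cons]
  · refine Finset.sum_congr rfl fun s _ => ?_
    simp

/-- The generating function of the complete homogeneous symmetric polynomials is the inverse of
`∏ i, (1 - v i X)`. -/
theorem hPoly_series {ι : Type*} [Fintype ι] [inst : DecidableEq ι] (v : ι → A) :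
    PowerSeries.mk (fun k => hPoly k v) * ∏ i, (1 - PowerSeries.C (v i) * PowerSeries.X) = 1 := by
  have hinst : inst = fun a b => Classical.propDecidable (a = b) := Subsingleton.elim _ _
  subst hinst
  revert v
  refine Fintype.induction_empty_option (P := fun ι [Fintype ι] => ∀ v : ι → A,
    PowerSeries.mk (fun k => hPoly k v) * ∏ i, (1 - PowerSeries.C (v i) * PowerSeries.X) = 1)
    ?_ ?_ ?_ ι
  · intro α β _ e h v
    let _ : Fintype α := Fintype.ofEquiv β e.symm
    refine Eq.trans ?_ (h fun i => v (e i))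
    congr 1
    · congr 1; funext k
      rw [← hPoly_equiv e]
    · exact (Fintype.prod_equiv e
        (fun i => 1 - PowerSeries.C (v (e i)) * PowerSeries.X) _ fun _ => rfl).symm
  · intro v
    ext k
    rcases k with _ | k
    · simp [hPoly_zero]
    · simp [hPoly, PowerSeries.coeff_one]
  · intro ι _ ih v
    rw [Fintype.prod_option, ← mul_assoc]
    refine Eq.trans ?_ (ih fun i => v (some i))
    congr 1
    ext k
    rcases k with _ | k
    · simp [hPoly_zero]
    · rw [mul_sub, mul_one, map_sub, PowerSeries.coeff_mk, PowerSeries.coeff_mk, ← mul_assoc,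
        PowerSeries.coeff_succ_mul_X, mul_comm, PowerSeries.coeff_C_mul, PowerSeries.coeff_mk,
        hPoly_option]
      ring

lemma map_hPoly {B ι : Type*} [CommRing B] [Fintype ι] [DecidableEq ι] (φ : A →+* B) (k : ℕ)
    (v : ι → A) : φ (hPoly k v) = hPoly k (fun i => φ (v i)) := by
  unfold hPoly
  rw [map_sum]
  refine Finset.sum_congr rfl fun s _ => ?_
  rw [map_multiset_prod, Multiset.map_map]
  rfl

end Homogeneous

/-! ### The Pieri rule -/

section Assembly
open scoped Classical
variable {A : Type*} [CommRing A]

/-- The factor `∏ (1 - q^{2j} y t)`, `0 ≤ j < n`, as a power series in `t`. -/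
noncomputable def cf (n : ℕ) (q y : A) : PowerSeries A :=
  ∏ j ∈ Finset.range n,
    (1 - PowerSeries.C q ^ (2 * j) * (PowerSeries.C y * PowerSeries.X))

/-- The Pieri rule as an identity of power series modulo `X ^ (K + 1)`, with the factors `cf` on the
side of the strips. By induction on the number of letters: the operator for strips marked by `X` is
moved through the largest letter with `Uw_comm`. Without letters only the core occurs, from which no
strip can be removed. -/
theorem pieri_trunc {n : ℕ} (hn : 1 ≤ n) (q qi : A) (hq : q * qi = 1) {δ : YoungDiagram}
    (hδ : ∀ mu, ¬ RibbonStep n δ mu) (K B m : ℕ) :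
    ∀ (y : Fin m → A) (β : YoungDiagram), β.card + n * K ≤ B →
      (PowerSeries.X : PowerSeries A) ^ (K + 1) ∣
        (∏ i, cf n q (y i)) * ∑ μ ∈ diags B,
            Uw n (PowerSeries.C q) PowerSeries.X β μ * PowerSeries.C (Rf n q δ m y μ)
          - PowerSeries.C (Rf n q δ m y β) := by
  induction m with
  | zero =>
    intro y β hβ
    have hβ' : β.card ≤ B := le_trans (Nat.le_add_right _ _) hβ
    have e : ∑ μ ∈ diags B,
        Uw n (PowerSeries.C q) PowerSeries.X β μ * PowerSeries.C (Rf n q δ 0 y μ)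
        = PowerSeries.C (Rf n q δ 0 y β) := by
      have h0 : HSb n (bit β) (bit β) ∅ := HSb_empty.2 rfl
      rw [Finset.sum_eq_single β]
      · rw [Uw_of_HSb hn _ _ h0]
        simp [spinb]
      · intro μ _ hμ
        by_cases h : μ = δ
        · subst h
          rw [Uw_eq_zero, zero_mul]
          rintro ⟨E, hE⟩
          have := core_bottom hn hδ hE
          subst this
          exact hμ (bit_injective (fun k => (congrFun (HSb_empty.1 hE) k).symm))
        · simp [Rf, h]
      · intro h; exact absurd (mem_diags.2 hβ') h
    rw [e]; simp
  | succ m ih =>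
    intro y β hβ
    have hβ' : β.card ≤ B := le_trans (Nat.le_add_right _ _) hβ
    set x := y (Fin.last m) with hx
    set y' : Fin m → A := fun i => y i.castSucc with hy'
    set P : PowerSeries A := ∏ i, cf n q (y' i) with hP
    have hC : (PowerSeries.C q : PowerSeries A) * PowerSeries.C qi = 1 := by
      rw [← map_mul, hq, map_one]
    have e1 : ∀ μ ∈ diags B, PowerSeries.C (Rf n q δ (m + 1) y μ) = ∑ α ∈ diags B,
        Uw n (PowerSeries.C q) (PowerSeries.C x) α μ * PowerSeries.C (Rf n q δ m y' α) := by
      intro μ hμ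
      rw [Rf_succ q δ y (mem_diags.1 hμ), map_sum]
      refine Finset.sum_congr rfl fun α _ => ?_
      rw [map_mul, map_Uw]
    have e2 : ∑ μ ∈ diags B,
            Uw n (PowerSeries.C q) PowerSeries.X β μ * PowerSeries.C (Rf n q δ (m + 1) y μ)
        = ∑ α ∈ diags B, (∑ γ ∈ diags B, Uw n (PowerSeries.C q) (PowerSeries.C x) α γ *
            Uw n (PowerSeries.C q) PowerSeries.X β γ) * PowerSeries.C (Rf n q δ m y' α) := by
      rw [Finset.sum_congr rfl fun μ hμ => by rw [e1 μ hμ, Finset.mul_sum], Finset.sum_comm]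
      refine Finset.sum_congr rfl fun α _ => ?_
      rw [Finset.sum_mul]
      refine Finset.sum_congr rfl fun γ _ => ?_
      ring
    have d1 : (PowerSeries.X : PowerSeries A) ^ (K + 1) ∣ ∑ α ∈ diags B, 
        P * PowerSeries.C (Rf n q δ m y' α) * (cf n q x *
          (∑ γ ∈ diags B, Uw n (PowerSeries.C q) (PowerSeries.C x) α γ *
            Uw n (PowerSeries.C q) PowerSeries.X β γ) - 
          ∑ ε ∈ diags B, Uw n (PowerSeries.C q) (PowerSeries.C x) ε β *
            Uw n (PowerSeries.C q) PowerSeries.X ε α) := by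
      refine Finset.dvd_sum fun α hα => Dvd.dvd.mul_left ?_ _
      exact Uw_comm hn (PowerSeries.C q) (PowerSeries.C qi) hC (PowerSeries.C x) PowerSeries.X K
        (mem_diags.1 hα) hβ
    have d2 : (PowerSeries.X : PowerSeries A) ^ (K + 1) ∣ ∑ ε ∈ diags B,
        Uw n (PowerSeries.C q) (PowerSeries.C x) ε β *
        (P * ∑ α ∈ diags B,
            Uw n (PowerSeries.C q) PowerSeries.X ε α * PowerSeries.C (Rf n q δ m y' α)
          - PowerSeries.C (Rf n q δ m y' ε)) := by
      refine Finset.dvd_sum fun ε _ => ?_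
      by_cases h : Uw n (PowerSeries.C q : PowerSeries A) (PowerSeries.C x) ε β = 0
      · rw [h, zero_mul]; exact dvd_zero _
      · refine Dvd.dvd.mul_left (ih y' ε ?_) _
        have := Finset.card_le_card (Uw_le h)
        exact le_trans (Nat.add_le_add_right this _) hβ
    have e3 := e1 β (mem_diags.2 hβ')
    have hsw : ∑ α ∈ diags B, P * PowerSeries.C (Rf n q δ m y' α) *
          ∑ ε ∈ diags B, Uw n (PowerSeries.C q) (PowerSeries.C x) ε β *
            Uw n (PowerSeries.C q) PowerSeries.X ε α
        = ∑ ε ∈ diags B, Uw n (PowerSeries.C q) (PowerSeries.C x) ε β *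
        (P * ∑ α ∈ diags B,
            Uw n (PowerSeries.C q) PowerSeries.X ε α * PowerSeries.C (Rf n q δ m y' α)) := by
      simp only [Finset.mul_sum]
      rw [Finset.sum_comm]
      refine Finset.sum_congr rfl fun ε _ => Finset.sum_congr rfl fun α _ => ?_
      ring
    have := dvd_add d1 d2
    rw [Fin.prod_univ_castSucc, e2, e3]
    convert this using 1
    simp only [mul_sub, Finset.sum_sub_distrib]
    rw [hsw, sub_add_sub_cancel, ← hP, ← hx, Finset.mul_sum]
    congr 1
    refine Finset.sum_congr rfl fun α _ => ?_
    ring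

/-- The Pieri rule over a ring in which `q` is invertible. -/
theorem pieri_unit {n : ℕ} (hn : 1 ≤ n) (q qi : A) (hq : q * qi = 1) {δ : YoungDiagram}
    (hδ : ∀ mu, ¬ RibbonStep n δ mu) (k m B : ℕ) (y : Fin m → A) (β : YoungDiagram)
    (hB : β.card + n * k ≤ B) :
    hPoly k (fun p : Fin m × Fin n => q ^ (2 * (p.2 : ℕ)) * y p.1) * Rf n q δ m y β =
      ∑ μ ∈ diags B with μ.card = β.card + n * k, Uw n q 1 β μ * Rf n q δ m y μ := by
  obtain ⟨Z, hZ⟩ := pieri_trunc hn q qi hq hδ k B m y β hB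
  have hs := hPoly_series (fun p : Fin m × Fin n => q ^ (2 * (p.2 : ℕ)) * y p.1)
  have hprod : ∏ p : Fin m × Fin n,
      (1 - PowerSeries.C (q ^ (2 * (p.2 : ℕ)) * y p.1) * PowerSeries.X) = ∏ i, cf n q (y i) := by
    rw [Fintype.prod_prod_type]
    refine Finset.prod_congr rfl fun i _ => ?_
    rw [cf, ← Fin.prod_univ_eq_prod_range
      (fun j => 1 - PowerSeries.C q ^ (2 * j) * (PowerSeries.C (y i) * PowerSeries.X))]
    refine Finset.prod_congr rfl fun j _ => ?_
    rw [map_mul, map_pow, mul_assoc]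
  rw [hprod] at hs
  set H := PowerSeries.mk (fun k => hPoly k (fun p : Fin m × Fin n => q ^ (2 * (p.2 : ℕ)) * y p.1))
    with hH
  have e : H * PowerSeries.C (Rf n q δ m y β) = ∑ μ ∈ diags B,
      Uw n (PowerSeries.C q) PowerSeries.X β μ * PowerSeries.C (Rf n q δ m y μ)
      - PowerSeries.X ^ (k + 1) * (H * Z) := by
    linear_combination (-H) * hZ + (∑ μ ∈ diags B,
      Uw n (PowerSeries.C q) PowerSeries.X β μ * PowerSeries.C (Rf n q δ m y μ)) * hs
  have e' := congrArg (PowerSeries.coeff k) e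
  rw [PowerSeries.coeff_mul_C, hH, PowerSeries.coeff_mk, ← hH, map_sub, PowerSeries.coeff_X_pow_mul',
    if_neg (by omega), sub_zero, map_sum] at e'
  rw [e', Finset.sum_filter]
  refine Finset.sum_congr rfl fun μ _ => ?_
  rw [PowerSeries.coeff_mul_C]
  by_cases h : ∃ E, HSb n (bit β) (bit μ) E
  · obtain ⟨E, hE⟩ := h
    have hc := card_of_HSb hn hE
    rw [Uw_of_HSb hn _ _ hE, Uw_of_HSb hn _ _ hE, ← map_pow, PowerSeries.coeff_C_mul,
      PowerSeries.coeff_X_pow]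
    have : (μ.card = β.card + n * k) ↔ k = E.card := by
      rw [hc, Nat.add_left_cancel_iff, Nat.mul_right_inj (by omega)]
      exact eq_comm
    by_cases h' : k = E.card
    · rw [if_pos h', if_pos (this.2 h')]; simp
    · rw [if_neg h', if_neg (fun hh => h' (this.1 hh))]; simp
  · rw [Uw_eq_zero _ _ h, Uw_eq_zero _ _ h]; simp

lemma stripSpin_eq {n : ℕ} (hn : 1 ≤ n) {lam mu : YoungDiagram} (hle : lam ≤ mu)
    {T : Finset (Finset Cell)} (hT : IsHStripTiling n (mu.cells \ lam.cells) T) :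
    stripSpin n (mu.cells \ lam.cells) = tilingSpin T := by
  have h : ∃ T, IsHStripTiling n (mu.cells \ lam.cells) T := ⟨T, hT⟩
  rw [stripSpin, dif_pos h, tiling_unique hn hle h.choose_spec hT]

end Assembly

/-- the ribbon Pieri rule, homogeneous version. -/
theorem ribbon_pieri_h (n k N : ℕ) (hn : 1 ≤ n) (hk : 1 ≤ k) (hN : 1 ≤ N)
    (lam : YoungDiagram) :
    hPoly k (alphabetVal n N) * G n N lam =
      ∑ᶠ mu ∈ {mu : YoungDiagram | lam ≤ mu ∧ IsHStripCells n (mu.cells \ lam.cells) ∧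
          mu.card = lam.card + n * k},
        MvPolynomial.C ((Polynomial.X : Polynomial ℤ) ^ stripSpin n (mu.cells \ lam.cells)) *
          G n N mu := by
  set R := MvPolynomial (Fin N) (Polynomial ℤ)
  set B := lam.card + n * k with hB
  set q : R := MvPolynomial.C Polynomial.X with hq
  set δ := nCore n lam with hδ
  have hcore : ∀ mu, ¬ RibbonStep n δ mu := (nCore_spec hn lam).2
  -- The identity is proved in the fraction field, where `q` is invertible.
  have main : hPoly k (alphabetVal n N) * Rf n q δ N MvPolynomial.X lam =
      ∑ μ ∈ diags B with μ.card = lam.card + n * k, Uw n q 1 lam μ * Rf n q δ N MvPolynomial.X μ := by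
    apply IsFractionRing.injective R (FractionRing R)
    have hq0 : algebraMap R (FractionRing R) q ≠ 0 := by
      rw [Ne, IsFractionRing.to_map_eq_zero_iff, hq, MvPolynomial.C_eq_zero]
      exact Polynomial.X_ne_zero
    have := pieri_unit hn (algebraMap R (FractionRing R) q) (algebraMap R (FractionRing R) q)⁻¹
      (mul_inv_cancel₀ hq0) hcore k N B (fun i => algebraMap R (FractionRing R) (MvPolynomial.X i))
      lam le_rfl
    rw [map_mul, map_hPoly, map_Rf, map_sum]
    simp only [map_mul, map_Uw, map_Rf, map_one]
    rw [← this]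
    congr 2
    funext p
    simp [alphabetVal, hq]
  have hG : G n N lam = Rf n q δ N MvPolynomial.X lam := ribbonFn_eq_Rf hn N lam δ
  rw [hG, main]
  symm
  rw [finsum_mem_eq_sum_of_inter_support_eq (s := {mu : YoungDiagram | lam ≤ mu ∧
    IsHStripCells n (mu.cells \ lam.cells) ∧ mu.card = lam.card + n * k})
    (t := (diags B).filter fun mu => lam ≤ mu ∧
    IsHStripCells n (mu.cells \ lam.cells) ∧ mu.card = lam.card + n * k)]
  · rw [Finset.sum_filter, Finset.sum_filter]
    refine Finset.sum_congr rfl fun mu _ => ?_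
    by_cases h : lam ≤ mu ∧ IsHStripCells n (mu.cells \ lam.cells) ∧ mu.card = lam.card + n * k
    · rw [if_pos h, if_pos h.2.2]
      obtain ⟨hle, ⟨_, T, hT⟩, _⟩ := h
      obtain ⟨E, hE, _⟩ := HSb_iff_tiling hn hle hT
      rw [stripSpin_eq hn hle hT, Uw_of_tiling hn q 1 hle hT, one_pow, mul_one, map_pow, G,
        nCore_eq hn hE, ribbonFn_eq_Rf hn]
    · rw [if_neg h]
      split_ifs with hc
      · rw [Uw_eq_zero, zero_mul]
        rintro ⟨E, hE⟩
        obtain ⟨T, hT, _⟩ := tiling_of_HSb hn hE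
        have hle := le_of_HSb hE
        exact h ⟨hle, ⟨⟨mu, lam, hle, rfl⟩, T, hT⟩, hc⟩
      · rfl
  · congr 1
    ext mu
    simp only [Set.mem_ofPred_eq, Finset.coe_filter, mem_diags]
    constructor
    · intro h; exact ⟨by omega, h⟩
    · intro h; exact h.2
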